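/- Assume the Carleman condition on ν. For a matrix sequence S = (S_α)_{α∈ℕⁿ} ⊂ S^p and C > 0, the following are equivalent: (i) S has a p×p PSD matrix-valued representing measure supported on X ∩ [−C,C]ⁿ, where X = {x : G(x,y) ⪰ 0 ∀ y ∈ Y}; (ii) M(S) ⪰ 0, M^ν(G S) ⪰ 0, and there is C₀ > 0 with ‖S_α‖ ≤ C₀ C^{|α|} for all α. -/

import Mathlib

open MeasureTheory MvPolynomial Matrix Finset

noncomputable section

/-- A polynomial matrix is an SOS matrix if it factors as `Tᵀ * T`. -/
def IsSOSMatrix {σ : Type*} {ι : Type*} [Fintype ι]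
    (M : Matrix ι ι (MvPolynomial σ ℝ)) : Prop :=
  ∃ (l : ℕ) (T : Matrix (Fin l) ι (MvPolynomial σ ℝ)), M = Tᵀ * T

/-- A polynomial is a sum of squares. -/
def IsSOSPoly {σ : Type*} (f : MvPolynomial σ ℝ) : Prop :=
  ∃ (l : ℕ) (g : Fin l → MvPolynomial σ ℝ), f = ∑ i, (g i) ^ 2

/-- The block-trace bilinear map `⟨A,B⟩_p = Tr_p (Aᵀ (I_p ⊗ B))`. -/
def lram {R : Type*} [CommSemiring R] {ιp ιq : Type*} [Fintype ιq]
    (A : Matrix (ιp × ιq) (ιp × ιq) R) (B : Matrix ιq ιq R) :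
    Matrix ιp ιp R :=
  Matrix.of fun i j => ∑ a : ιq, ∑ c : ιq, A (j, c) (i, a) * B c a

/-- The `x`-part of an exponent in the variables `x ⊕ y`. -/
def xPart {n m : ℕ} (d : (Fin n ⊕ Fin m) →₀ ℕ) : Fin n →₀ ℕ :=
  Finsupp.comapDomain Sum.inl d Sum.inl_injective.injOn

/-- Integrate out the `y`-variables of a polynomial in `(x, y)` against the measure `ν`:
`∫_Y Σ_β H_β(x) y^β dν := Σ_β H_β(x) ∫_Y y^β dν`. -/
def integY {n m : ℕ} (ν : Measure (Fin m → ℝ))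
    (q : MvPolynomial (Fin n ⊕ Fin m) ℝ) : MvPolynomial (Fin n) ℝ :=
  ∑ d ∈ q.support, MvPolynomial.monomial (xPart d)
    (q.coeff d * ∫ y, ∏ j : Fin m, (y j) ^ (d (Sum.inr j)) ∂ν)

/-- All polynomial moments of `ν` are finite. -/
def momentsFinite {m : ℕ} (ν : Measure (Fin m → ℝ)) : Prop :=
  ∀ h : MvPolynomial (Fin m) ℝ, Integrable (fun y => |MvPolynomial.eval y h|) ν

/-- `ν` has support exactly `Y`. -/
def hasSupport {m : ℕ} (ν : Measure (Fin m → ℝ)) (Y : Set (Fin m → ℝ)) : Prop :=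
  ν Yᶜ = 0 ∧ ∀ U : Set (Fin m → ℝ), IsOpen U → (U ∩ Y).Nonempty → 0 < ν U

/-- The multivariate Carleman condition on `ν`. -/
def Carleman {m : ℕ} (ν : Measure (Fin m → ℝ)) : Prop :=
  ∀ j : Fin m, ¬ Summable (fun d : ℕ =>
    (∫ y, (y j) ^ (2 * (d + 1)) ∂ν) ^ (-(1 : ℝ) / (2 * (d + 1))))

/-- Evaluate a polynomial matrix at a point. -/
def evalMat {σ : Type*} {ι : Type*} (x : σ → ℝ)
    (M : Matrix ι ι (MvPolynomial σ ℝ)) : Matrix ι ι ℝ :=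
  M.map (MvPolynomial.eval x)

/-- The spectral (L²-operator) norm of a real matrix. -/
def specNorm {ι : Type*} [Fintype ι] [DecidableEq ι] (A : Matrix ι ι ℝ) : ℝ :=
  ‖(Matrix.toEuclideanLin A).toContinuousLinearMap‖

/-- Degree of a polynomial matrix. -/
def matDeg {ι σ : Type*} [Fintype ι] (M : Matrix ι ι (MvPolynomial σ ℝ)) : ℕ :=
  Finset.univ.sup fun i => Finset.univ.sup fun j => (M i j).totalDegree

/-- Degree in `x` of a polynomial in `(x,y)`. -/
def degX {n m : ℕ} (q : MvPolynomial (Fin n ⊕ Fin m) ℝ) : ℕ :=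
  q.support.sup fun d => ∑ i : Fin n, d (Sum.inl i)

/-- Degree in `y` of a polynomial in `(x,y)`. -/
def degY {n m : ℕ} (q : MvPolynomial (Fin n ⊕ Fin m) ℝ) : ℕ :=
  q.support.sup fun d => ∑ j : Fin m, d (Sum.inr j)

def matDegX {ι : Type*} {n m : ℕ} [Fintype ι]
    (M : Matrix ι ι (MvPolynomial (Fin n ⊕ Fin m) ℝ)) : ℕ :=
  Finset.univ.sup fun i => Finset.univ.sup fun j => degX (M i j)

def matDegY {ι : Type*} {n m : ℕ} [Fintype ι]
    (M : Matrix ι ι (MvPolynomial (Fin n ⊕ Fin m) ℝ)) : ℕ :=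
  Finset.univ.sup fun i => Finset.univ.sup fun j => degY (M i j)

/-- Homogeneity in `x` of a polynomial in `(x,y)`. -/
def IsHomogeneousX {n m : ℕ} (q : MvPolynomial (Fin n ⊕ Fin m) ℝ) (k : ℕ) : Prop :=
  ∀ d ∈ q.support, ∑ i : Fin n, d (Sum.inl i) = k

/-- Positive semidefiniteness of the full (infinite) moment matrix `M(S)`:
every finite principal block submatrix is PSD. -/
def MomentPSD {n p : ℕ} (S : (Fin n →₀ ℕ) → Matrix (Fin p) (Fin p) ℝ) : Prop :=
  ∀ (N : ℕ) (idx : Fin N → (Fin n →₀ ℕ)),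
    (Matrix.of fun a b : Fin N × Fin p => S (idx a.1 + idx b.1) a.2 b.2).PosSemidef

/-- Exponents of degree at most `d` in `n` variables. -/
def Expo (n d : ℕ) := {a : Fin n → Fin (d + 1) // ∑ i, (a i : ℕ) ≤ d}

instance (n d : ℕ) : Fintype (Expo n d) := by unfold Expo; infer_instance
instance (n d : ℕ) : DecidableEq (Expo n d) := by unfold Expo; infer_instance

def expF {n d : ℕ} (a : Fin n → Fin (d + 1)) : Fin n →₀ ℕ :=
  Finsupp.equivFunOnFinite.symm (fun i => (a i : ℕ))

/-- Truncated moment matrix `M_d(S)`. -/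
def momentMat {n p : ℕ} (S : (Fin n →₀ ℕ) → Matrix (Fin p) (Fin p) ℝ) (d : ℕ) :
    Matrix (Expo n d × Fin p) (Expo n d × Fin p) ℝ :=
  Matrix.of fun a b => S (expF a.1.1 + expF b.1.1) a.2 b.2

/-- Truncated localizing matrix `M^ν_{d,k}(G S)`. -/
def locMat {n m p q : ℕ} (ν : Measure (Fin m → ℝ))
    (G : Matrix (Fin q) (Fin q) (MvPolynomial (Fin n ⊕ Fin m) ℝ))
    (S : (Fin n →₀ ℕ) → Matrix (Fin p) (Fin p) ℝ) (d k : ℕ) :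
    Matrix ((Expo n d × Expo m k) × (Fin p × Fin q))
           ((Expo n d × Expo m k) × (Fin p × Fin q)) ℝ :=
  Matrix.of fun r c =>
    ∑ e ∈ (G r.2.2 c.2.2).support,
      (∫ y, ∏ j : Fin m, (y j) ^ (e (Sum.inr j) + (r.1.2.1 j : ℕ) + (c.1.2.1 j : ℕ)) ∂ν) *
      ((G r.2.2 c.2.2).coeff e *
        S (expF r.1.1.1 + expF c.1.1.1 + xPart e) r.2.1 c.2.1)

/-- The Riesz functional `L_S(H) = Σ_α tr(H_α S_α)`. -/
def RieszL {n p : ℕ} (S : (Fin n →₀ ℕ) → Matrix (Fin p) (Fin p) ℝ)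
    (H : Matrix (Fin p) (Fin p) (MvPolynomial (Fin n) ℝ)) : ℝ :=
  ∑ i, ∑ j, ∑ α ∈ (H i j).support, (H i j).coeff α * S α j i

end

/-- Integral of a function against a signed measure, via the Jordan decomposition. -/
noncomputable def sInt {α : Type*} [MeasurableSpace α] (s : MeasureTheory.SignedMeasure α)
    (f : α → ℝ) : ℝ :=
  (∫ x, f x ∂s.toJordanDecomposition.posPart) -
    (∫ x, f x ∂s.toJordanDecomposition.negPart)

/-!
The two conditions are linked by polynomials: `M(S) ⪰ 0` and `M^ν(G S) ⪰ 0` say that the functional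
of `S` is nonnegative on squares, before and after multiplication by `G` and integration over `ν`.

*Necessity.* A positive semidefinite matrix-valued measure has a positive semidefinite density with
respect to a finite positive measure, so both forms are integrals of traces of products of positive
semidefinite matrices, and `|x^α| ≤ C^|α|` on the box gives the growth bound.

*Sufficiency.* The positive sequences with `‖S_α‖ = O(C^|α|)` and `tr S_0 = 1` form a compact convex
set. The functionals `f ↦ L((1 ± x_l / C) f)` are again positive and bounded in the same way, and
they average to `L`; hence an extreme sequence is `α ↦ u^α A` with `u` in the box and `A` positive
semidefinite of trace one, and Krein–Milman represents `S_α` as `∫ u^α A dμ(u, A)`. For `x` in the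
support of the marginal of `μ`, weights which peak at `x` turn `M^ν(G S) ⪰ 0` into
`∫ g(y)² vᵀG(x, y)v dν(y) ≥ 0` for all polynomials `g`. By Carleman's inequality, Carleman's
condition makes the Christoffel functions of the marginals of `ν` vanish off the real line, so that
resolvents `1 / (y_j - z)` are limits of polynomials in weighted `L²`. Thus `g²` may be replaced by
`∏ ((y_j - a_j)² + 1)^(-N)`, which peaks at `y = a`; this yields `vᵀG(x, a)v ≥ 0` for `a` in the
support of `ν`.
-/

noncomputable section

open scoped Polynomial Topology

/-! ### Carleman's inequality -/

lemma sum_range_average (b : ℕ → ℝ) (N : ℕ) :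
    ∑ n ∈ range N, (∑ k ∈ range (n + 1), b k) / ((n + 1) * (n + 2)) =
      ∑ k ∈ range N, b k / (k + 1) - (∑ k ∈ range N, b k) / (N + 1) := by
  induction N with
  | zero => simp
  | succ N ih =>
    rw [sum_range_succ, ih, sum_range_succ (fun k => b k / ((k : ℝ) + 1)), sum_range_succ b N]
    push_cast
    field_simp
    ring

/-- The weights `(k + 2) ^ (k + 1) / (k + 1) ^ k` of Pólya's proof of Carleman's inequality: their
partial products are perfect powers, while they stay below `e * (k + 1)`. -/
def polyaWeight (k : ℕ) : ℝ := ((k : ℝ) + 2) ^ (k + 1) / ((k : ℝ) + 1) ^ k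

lemma polyaWeight_pos (k : ℕ) : 0 < polyaWeight k := by unfold polyaWeight; positivity

lemma prod_polyaWeight (n : ℕ) : ∏ k ∈ range n, polyaWeight k = ((n : ℝ) + 1) ^ n := by
  induction n with
  | zero => simp
  | succ n ih =>
    rw [prod_range_succ, ih, polyaWeight]
    push_cast
    field_simp
    ring

lemma polyaWeight_le (k : ℕ) : polyaWeight k ≤ Real.exp 1 * (k + 1) := by
  have hk : (0 : ℝ) < k + 1 := by positivity
  calc polyaWeight k = (1 / ((k : ℝ) + 1) + 1) ^ (k + 1) * (k + 1) := by
        have : 1 / ((k : ℝ) + 1) + 1 = (k + 2) / (k + 1) := by field_simp; ring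
        rw [polyaWeight, this, div_pow]
        field_simp
        ring
    _ ≤ Real.exp (1 / ((k : ℝ) + 1)) ^ (k + 1) * (k + 1) := by
        gcongr
        exact Real.add_one_le_exp _
    _ = Real.exp 1 * (k + 1) := by
        rw [← Real.exp_nat_mul]
        push_cast
        rw [mul_one_div_cancel hk.ne']

lemma geom_mean_le_weighted_average {a : ℕ → ℝ} (ha : ∀ n, 0 ≤ a n) (n : ℕ) :
    (∏ k ∈ range (n + 1), a k) ^ (1 / ((n : ℝ) + 1)) ≤
      (∑ k ∈ range (n + 1), a k * polyaWeight k) / ((n + 1) * (n + 2)) := by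
  have hn : (0 : ℝ) < n + 1 := by positivity
  have hterm : ∀ k, 0 ≤ a k * polyaWeight k := fun k => mul_nonneg (ha k) (polyaWeight_pos k).le
  have hamgm := Real.geom_mean_le_arith_mean_weighted (range (n + 1))
    (fun _ => 1 / ((n : ℝ) + 1)) (fun k => a k * polyaWeight k) (fun _ _ => by positivity)
    (by simp [hn.ne']) (fun k _ => hterm k)
  have hroot : ((((n + 1 : ℕ) : ℝ) + 1) ^ (n + 1)) ^ (1 / ((n : ℝ) + 1)) = n + 2 := by
    rw [one_div, ← Nat.cast_add_one n, Real.pow_rpow_inv_natCast (by positivity) n.succ_ne_zero]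
    push_cast
    ring
  rw [Real.finsetProd_rpow _ _ fun k _ => hterm k, prod_mul_distrib, prod_polyaWeight,
    Real.mul_rpow (prod_nonneg fun k _ => ha k) (by positivity), hroot, ← mul_sum] at hamgm
  rw [le_div_iff₀ (by positivity)]
  calc _ = ((∏ k ∈ range (n + 1), a k) ^ (1 / ((n : ℝ) + 1)) * (n + 2)) * (n + 1) := by ring
    _ ≤ (1 / ((n : ℝ) + 1) * ∑ k ∈ range (n + 1), a k * polyaWeight k) * (n + 1) := by gcongr
    _ = _ := by field_simp

theorem sum_geom_mean_le {a : ℕ → ℝ} (ha : ∀ n, 0 ≤ a n) (N : ℕ) :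
    ∑ n ∈ range N, (∏ k ∈ range (n + 1), a k) ^ (1 / ((n : ℝ) + 1)) ≤
      Real.exp 1 * ∑ k ∈ range N, a k := by
  have hterm : ∀ k, 0 ≤ a k * polyaWeight k := fun k => mul_nonneg (ha k) (polyaWeight_pos k).le
  calc _ ≤ ∑ n ∈ range N, (∑ k ∈ range (n + 1), a k * polyaWeight k) / ((n + 1) * (n + 2)) :=
        sum_le_sum fun n _ => geom_mean_le_weighted_average ha n
    _ ≤ ∑ k ∈ range N, a k * polyaWeight k / (k + 1) := by
        rw [sum_range_average]
        exact sub_le_self _ (div_nonneg (sum_nonneg fun k _ => hterm k) (by positivity))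
    _ ≤ ∑ k ∈ range N, Real.exp 1 * a k := by
        refine sum_le_sum fun k _ => ?_
        rw [div_le_iff₀ (by positivity)]
        linarith [mul_le_mul_of_nonneg_left (polyaWeight_le k) (ha k)]
    _ = _ := (mul_sum ..).symm

lemma summable_geom_mean {a : ℕ → ℝ} (ha : ∀ n, 0 ≤ a n) (hs : Summable a) :
    Summable fun n : ℕ => (∏ k ∈ range (n + 1), a k) ^ (1 / ((n : ℝ) + 1)) :=
  summable_of_sum_range_le (fun _ => Real.rpow_nonneg (prod_nonneg fun k _ => ha k) _) fun N =>
    (sum_geom_mean_le ha N).trans <|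
      mul_le_mul_of_nonneg_left (hs.sum_le_tsum _ fun n _ => ha n) (Real.exp_pos 1).le

lemma prod_range_sqrt_ratio {h : ℕ → ℝ} (hpos : ∀ n, 0 < h n) (n : ℕ) :
    ∏ k ∈ range n, √(h k / h (k + 1)) = √(h 0 / h n) := by
  induction n with
  | zero => simp [(hpos 0).ne']
  | succ n ih =>
    have h₀ := hpos 0
    have h₁ := hpos n
    have h₂ := hpos (n + 1)
    rw [prod_range_succ, ih, ← Real.sqrt_mul (by positivity)]
    congr 1
    field_simp

lemma rpow_le_max_one {x t : ℝ} (hx : 0 ≤ x) (ht0 : 0 ≤ t) (ht1 : t ≤ 1) : x ^ t ≤ max 1 x := by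
  rcases le_total x 1 with h | h
  · exact (Real.rpow_le_one hx h ht0).trans (le_max_left _ _)
  · exact (Real.rpow_le_rpow_of_exponent_le h ht1).trans
      ((Real.rpow_one x).trans_le (le_max_right _ _))

lemma summable_rpow_neg_of_summable_sqrt_ratio {h : ℕ → ℝ} (hpos : ∀ n, 0 < h n)
    (hs : Summable fun n => √(h n / h (n + 1))) :
    Summable fun n : ℕ => h (n + 1) ^ (-(1 : ℝ) / (2 * (n + 1))) := by
  have hgeom := summable_geom_mean (fun _ => Real.sqrt_nonneg _) hs
  simp only [prod_range_sqrt_ratio hpos] at hgeom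
  refine Summable.of_nonneg_of_le (fun n => Real.rpow_nonneg (hpos _).le _) (fun n => ?_)
    (hgeom.mul_left (max 1 (1 / h 0)))
  have h₀ := hpos 0
  have h₁ := hpos (n + 1)
  have : (0 : ℝ) < n + 1 := by positivity
  calc h (n + 1) ^ (-(1 : ℝ) / (2 * (n + 1)))
      = (1 / h 0) ^ (1 / (2 * ((n : ℝ) + 1))) * √(h 0 / h (n + 1)) ^ (1 / ((n : ℝ) + 1)) := by
        have hhalf : (1 : ℝ) / 2 * (1 / (n + 1)) = 1 / (2 * (n + 1)) := by field_simp
        rw [Real.sqrt_eq_rpow, ← Real.rpow_mul (by positivity), hhalf,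
          ← Real.mul_rpow (by positivity) (by positivity), neg_div, Real.rpow_neg h₁.le,
          ← Real.inv_rpow h₁.le]
        congr 1
        field_simp
    _ ≤ _ := by
        gcongr
        refine rpow_le_max_one (by positivity) (by positivity) ?_
        rw [div_le_one (by positivity)]
        linarith

/-! ### Orthogonal polynomials -/

section OrthPoly

variable {K : Type*} [Field K]

/-- The monic orthogonal polynomials of a functional `T` on `K[X]`, defined by the three-term
recurrence. They are meaningful as long as no `T (Pₙ ^ 2)` vanishes. -/
def orthPoly (T : K[X] →ₗ[K] K) : ℕ → K[X]
  | 0 => 1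
  | 1 => Polynomial.X - Polynomial.C (T Polynomial.X / T 1)
  | n + 2 =>
    (Polynomial.X - Polynomial.C
      (T (Polynomial.X * orthPoly T (n + 1) ^ 2) / T (orthPoly T (n + 1) ^ 2))) *
        orthPoly T (n + 1) -
      Polynomial.C (T (orthPoly T (n + 1) ^ 2) / T (orthPoly T n ^ 2)) * orthPoly T n

lemma map_C_mul (T : K[X] →ₗ[K] K) (a : K) (p : K[X]) : T (Polynomial.C a * p) = a * T p := by
  rw [Polynomial.C_mul', map_smul, smul_eq_mul]

lemma orthPoly_monic_and_natDegree (T : K[X] →ₗ[K] K) (n : ℕ) :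
    (orthPoly T n).Monic ∧ (orthPoly T n).natDegree = n := by
  induction n using Nat.twoStepInduction with
  | zero => simp [orthPoly]
  | one => exact ⟨Polynomial.monic_X_sub_C _, Polynomial.natDegree_X_sub_C _⟩
  | more n ih₀ ih₁ =>
    rw [orthPoly]
    set a := T (Polynomial.X * orthPoly T (n + 1) ^ 2) / T (orthPoly T (n + 1) ^ 2)
    set c := T (orthPoly T (n + 1) ^ 2) / T (orthPoly T n ^ 2)
    have hdeg : ((Polynomial.X - Polynomial.C a) * orthPoly T (n + 1)).natDegree = n + 2 := by
      rw [(Polynomial.monic_X_sub_C a).natDegree_mul ih₁.1, Polynomial.natDegree_X_sub_C, ih₁.2]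
      omega
    have hlt : (Polynomial.C c * orthPoly T n).natDegree <
        ((Polynomial.X - Polynomial.C a) * orthPoly T (n + 1)).natDegree := by
      rw [hdeg]
      exact (Polynomial.natDegree_C_mul_le _ _).trans_lt (by omega)
    exact ⟨((Polynomial.monic_X_sub_C a).mul ih₁.1).sub_of_left (Polynomial.degree_lt_degree hlt),
      (Polynomial.natDegree_sub_eq_left_of_natDegree_lt hlt).trans hdeg⟩

lemma orthPoly_monic (T : K[X] →ₗ[K] K) (n : ℕ) : (orthPoly T n).Monic :=
  (orthPoly_monic_and_natDegree T n).1

lemma natDegree_orthPoly (T : K[X] →ₗ[K] K) (n : ℕ) : (orthPoly T n).natDegree = n :=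
  (orthPoly_monic_and_natDegree T n).2

lemma degree_orthPoly (T : K[X] →ₗ[K] K) (n : ℕ) : (orthPoly T n).degree = n := by
  rw [Polynomial.degree_eq_natDegree (orthPoly_monic T n).ne_zero, natDegree_orthPoly]

lemma degree_sub_coeff_mul_orthPoly_lt (T : K[X] →ₗ[K] K) {n : ℕ} {p : K[X]}
    (hp : p.degree < ↑(n + 1)) :
    (p - Polynomial.C (p.coeff n) * orthPoly T n).degree < n := by
  rw [Polynomial.degree_lt_iff_coeff_zero] at hp ⊢
  intro k hk
  rw [Polynomial.coeff_sub, Polynomial.coeff_C_mul]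
  obtain rfl | hlt := hk.eq_or_lt
  · have hlead : (orthPoly T n).coeff n = 1 := by
      simpa [natDegree_orthPoly] using (orthPoly_monic T n).coeff_natDegree
    rw [hlead, mul_one, sub_self]
  · have hzero : (orthPoly T n).coeff k = 0 :=
      Polynomial.coeff_eq_zero_of_natDegree_lt (by rwa [natDegree_orthPoly])
    rw [hp k hlt, hzero, mul_zero, sub_zero]

variable {T : K[X] →ₗ[K] K}

lemma map_orthPoly_mul_of_orthogonal {n : ℕ}
    (horth : ∀ p : K[X], p.degree < n → T (orthPoly T n * p) = 0) {p : K[X]}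
    (hp : p.degree < ↑(n + 1)) : T (orthPoly T n * p) = p.coeff n * T (orthPoly T n ^ 2) := by
  have hrest := horth _ (degree_sub_coeff_mul_orthPoly_lt T hp)
  rw [mul_sub, map_sub, mul_left_comm, map_C_mul, ← sq] at hrest
  exact sub_eq_zero.1 hrest

theorem map_orthPoly_mul_eq_zero (hT : ∀ n, T (orthPoly T n ^ 2) ≠ 0) (n : ℕ) :
    ∀ p : K[X], p.degree < n → T (orthPoly T n * p) = 0 := by
  induction n using Nat.twoStepInduction with
  | zero =>
    intro p hp
    rw [Polynomial.degree_eq_bot.1 ((Nat.WithBot.lt_zero_iff).1 hp), mul_zero, map_zero]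
  | one =>
    intro p hp
    have hT1 : T 1 ≠ 0 := by simpa [orthPoly] using hT 0
    rw [Polynomial.eq_C_of_degree_le_zero (Order.lt_succ_iff.1 hp), mul_comm, map_C_mul, orthPoly,
      map_sub, ← mul_one (Polynomial.C (T _ / T 1)), map_C_mul, div_mul_cancel₀ _ hT1, sub_self,
      mul_zero]
  | more n ih₀ ih₁ =>
    intro p hp
    set P := orthPoly T (n + 1) with hP
    set a := T (Polynomial.X * P ^ 2) / T (P ^ 2) with ha
    set c := T (P ^ 2) / T (orthPoly T n ^ 2) with hc
    have hrec : ∀ r : K[X], T (orthPoly T (n + 2) * r) =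
        T (P * (Polynomial.X * r)) - a * T (P * r) - c * T (orthPoly T n * r) := by
      intro r
      rw [← map_C_mul, ← map_C_mul, ← map_sub, ← map_sub, orthPoly]
      congr 1
      ring
    have hP_sq : T (orthPoly T (n + 2) * P) = 0 := by
      have hlt : (orthPoly T n).degree < ↑(n + 1) := by
        rw [degree_orthPoly]; exact_mod_cast n.lt_succ_self
      have horth : T (orthPoly T n * P) = 0 := by rw [mul_comm]; exact ih₁ _ hlt
      rw [hrec, horth, mul_zero, sub_zero, mul_left_comm, ← sq, ha,
        div_mul_cancel₀ _ (hT _), sub_self]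
    have hrest : ∀ r : K[X], r.degree < ↑(n + 1) → T (orthPoly T (n + 2) * r) = 0 := by
      intro r hr
      have hXr : (Polynomial.X * r).degree < ↑(n + 1 + 1) := by
        rw [Polynomial.degree_lt_iff_coeff_zero] at hr ⊢
        rintro (_ | k) hk
        · simp
        · rw [Polynomial.coeff_X_mul]; exact hr k (by omega)
      rw [hrec, map_orthPoly_mul_of_orthogonal ih₁ hXr, ih₁ r hr,
        map_orthPoly_mul_of_orthogonal ih₀ hr, Polynomial.coeff_X_mul, hc]
      field_simp [hT n]
      ring
    have hdecomp := hrest _ (degree_sub_coeff_mul_orthPoly_lt T hp)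
    rwa [mul_sub, map_sub, mul_left_comm, map_C_mul, ← hP, hP_sq, mul_zero, sub_zero] at hdecomp

lemma map_orthPoly_mul_orthPoly (hT : ∀ n, T (orthPoly T n ^ 2) ≠ 0) {j k : ℕ} (hjk : j ≠ k) :
    T (orthPoly T j * orthPoly T k) = 0 := by
  rcases hjk.lt_or_gt with h | h
  · rw [mul_comm]
    exact map_orthPoly_mul_eq_zero hT k _ (by rw [degree_orthPoly]; exact_mod_cast h)
  · exact map_orthPoly_mul_eq_zero hT j _ (by rw [degree_orthPoly]; exact_mod_cast h)

lemma map_orthPoly_mul_X_pow (hT : ∀ n, T (orthPoly T n ^ 2) ≠ 0) (n : ℕ) :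
    T (orthPoly T n * Polynomial.X ^ n) = T (orthPoly T n ^ 2) := by
  rw [map_orthPoly_mul_of_orthogonal (map_orthPoly_mul_eq_zero hT n)
    (by rw [Polynomial.degree_X_pow]; exact_mod_cast n.lt_succ_self), Polynomial.coeff_X_pow_self,
    one_mul]

lemma map_sum_C_mul_orthPoly_sq (hT : ∀ n, T (orthPoly T n ^ 2) ≠ 0) (c : ℕ → K) (s : Finset ℕ) :
    T ((∑ k ∈ s, Polynomial.C (c k) * orthPoly T k) ^ 2) =
      ∑ k ∈ s, c k ^ 2 * T (orthPoly T k ^ 2) := by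
  rw [sq, sum_mul_sum, map_sum]
  refine sum_congr rfl fun k hk => ?_
  rw [map_sum, sum_eq_single_of_mem k hk fun j _ hj => ?_]
  · rw [mul_mul_mul_comm, ← Polynomial.C_mul, map_C_mul, ← sq, ← sq]
  · rw [mul_mul_mul_comm, ← Polynomial.C_mul, map_C_mul, map_orthPoly_mul_orthPoly hT hj.symm,
      mul_zero]

end OrthPoly

lemma sq_map_mul_le {R : Type*} [CommRing R] [Algebra ℝ R] {T : R →ₗ[ℝ] ℝ}
    (hT : ∀ p, 0 ≤ T (p ^ 2)) (p r : R) : T (p * r) ^ 2 ≤ T (p ^ 2) * T (r ^ 2) := by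
  have hquad : ∀ s : ℝ, 0 ≤ T (r ^ 2) * (s * s) + 2 * T (p * r) * s + T (p ^ 2) := by
    intro s
    have hexp : (p + s • r) ^ 2 = p ^ 2 + (2 * s) • (p * r) + (s * s) • r ^ 2 := by
      simp only [Algebra.smul_def, map_mul, map_ofNat]
      ring
    have hpos := hT (p + s • r)
    rw [hexp, map_add, map_add, map_smul, map_smul, smul_eq_mul, smul_eq_mul] at hpos
    linarith
  have hdiscrim := discrim_le_zero hquad
  rw [discrim] at hdiscrim
  nlinarith

/-! ### The Christoffel function off the real line -/

section Christoffel

variable {T : ℝ[X] →ₗ[ℝ] ℝ}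

/-- The summand `|Pₙ(z)|² / T(Pₙ²)` of the reciprocal Christoffel function of `T` at `z`. -/
def christoffelTerm (T : ℝ[X] →ₗ[ℝ] ℝ) (z : ℂ) (n : ℕ) : ℝ :=
  Complex.normSq (Polynomial.aeval z (orthPoly T n)) / T (orthPoly T n ^ 2)

lemma orthPoly_sq_pos (hT : ∀ p : ℝ[X], p ≠ 0 → 0 < T (p ^ 2)) (n : ℕ) :
    0 < T (orthPoly T n ^ 2) :=
  hT _ (orthPoly_monic T n).ne_zero

lemma christoffelTerm_nonneg (hT : ∀ p : ℝ[X], p ≠ 0 → 0 < T (p ^ 2)) (z : ℂ) (n : ℕ) :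
    0 ≤ christoffelTerm T z n :=
  div_nonneg (Complex.normSq_nonneg _) (orthPoly_sq_pos hT n).le

lemma orthPoly_sq_le (hT : ∀ p : ℝ[X], p ≠ 0 → 0 < T (p ^ 2)) (n : ℕ) :
    T (orthPoly T n ^ 2) ≤ T (Polynomial.X ^ (2 * n)) := by
  have hT₀ : ∀ p : ℝ[X], 0 ≤ T (p ^ 2) := fun p => by
    rcases eq_or_ne p 0 with rfl | hp
    · simp
    · exact (hT p hp).le
  have hCS := sq_map_mul_le hT₀ (orthPoly T n) (Polynomial.X ^ n)
  rw [map_orthPoly_mul_X_pow (fun n => (orthPoly_sq_pos hT n).ne'), ← pow_mul', sq] at hCS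
  exact le_of_mul_le_mul_left hCS (orthPoly_sq_pos hT n)

theorem christoffel_darboux (hT : ∀ n, T (orthPoly T n ^ 2) ≠ 0) (z : ℂ) (n : ℕ) :
    z.im * ∑ k ∈ range (n + 1), christoffelTerm T z k =
      (Polynomial.aeval z (orthPoly T (n + 1)) *
        (starRingEnd ℂ) (Polynomial.aeval z (orthPoly T n))).im / T (orthPoly T n ^ 2) := by
  induction n with
  | zero => simp [christoffelTerm, orthPoly, div_eq_mul_inv]
  | succ n ih =>
    have h₁ := hT (n + 1)
    have h₀ := hT n
    rw [sum_range_succ, mul_add, ih, christoffelTerm, orthPoly]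
    set P := Polynomial.aeval z (orthPoly T (n + 1))
    set Q := Polynomial.aeval z (orthPoly T n)
    simp only [map_sub, map_mul, Polynomial.aeval_X, Polynomial.aeval_C, Complex.coe_algebraMap,
      Complex.sub_im, Complex.sub_re, Complex.mul_im, Complex.mul_re, Complex.conj_re,
      Complex.conj_im, Complex.ofReal_re, Complex.ofReal_im, Complex.normSq_apply]
    field_simp
    ring

lemma abs_im_div_le_norm_mul_norm (hT : ∀ p : ℝ[X], p ≠ 0 → 0 < T (p ^ 2)) (z : ℂ) (n : ℕ) :
    |z.im| / T 1 ≤ ‖Polynomial.aeval z (orthPoly T (n + 1))‖ *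
      ‖Polynomial.aeval z (orthPoly T n)‖ / T (orthPoly T n ^ 2) := by
  have hn := orthPoly_sq_pos hT n
  have hterm₀ : 1 / T 1 ≤ ∑ k ∈ range (n + 1), christoffelTerm T z k := by
    refine le_trans (by simp [christoffelTerm, orthPoly]) (single_le_sum
      (fun k _ => christoffelTerm_nonneg hT z k) (mem_range.2 n.succ_pos))
  calc |z.im| / T 1 = |z.im| * (1 / T 1) := by ring
    _ ≤ |z.im| * ∑ k ∈ range (n + 1), christoffelTerm T z k := by gcongr
    _ = |(Polynomial.aeval z (orthPoly T (n + 1)) *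
          (starRingEnd ℂ) (Polynomial.aeval z (orthPoly T n))).im| / T (orthPoly T n ^ 2) := by
        rw [← abs_of_nonneg (sum_nonneg fun k _ => christoffelTerm_nonneg hT z k), ← abs_mul,
          christoffel_darboux (fun n => (orthPoly_sq_pos hT n).ne'), abs_div, abs_of_pos hn]
    _ ≤ _ := by
        gcongr
        refine (Complex.abs_im_le_norm _).trans_eq ?_
        rw [norm_mul, RCLike.norm_conj]

lemma sqrt_ratio_le_christoffelTerm (hT : ∀ p : ℝ[X], p ≠ 0 → 0 < T (p ^ 2)) {z : ℂ}
    (hz : z.im ≠ 0) (n : ℕ) :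
    √(T (orthPoly T n ^ 2) / T (orthPoly T (n + 1) ^ 2)) ≤
      T 1 / |z.im| * (christoffelTerm T z n + christoffelTerm T z (n + 1)) := by
  have hT1 : 0 < T 1 := by simpa [orthPoly] using orthPoly_sq_pos hT 0
  have : 0 < |z.im| := abs_pos.2 hz
  have hsq : ∀ k, ∃ s > 0, T (orthPoly T k ^ 2) = s ^ 2 := fun k =>
    ⟨_, Real.sqrt_pos.2 (orthPoly_sq_pos hT k), (Real.sq_sqrt (orthPoly_sq_pos hT k).le).symm⟩
  obtain ⟨s, hs, hPs⟩ := hsq n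
  obtain ⟨t, ht, hPt⟩ := hsq (n + 1)
  have hprod := abs_im_div_le_norm_mul_norm hT z n
  rw [christoffelTerm, christoffelTerm, Complex.normSq_eq_norm_sq, Complex.normSq_eq_norm_sq,
    hPs, hPt, ← div_pow, ← div_pow, ← div_pow, Real.sqrt_sq (by positivity)]
  rw [hPs] at hprod
  set a := ‖Polynomial.aeval z (orthPoly T n)‖
  set b := ‖Polynomial.aeval z (orthPoly T (n + 1))‖
  calc s / t = T 1 / |z.im| * (|z.im| / T 1 * (s / t)) := by field_simp
    _ ≤ T 1 / |z.im| * (b * a / s ^ 2 * (s / t)) := by gcongr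
    _ = T 1 / |z.im| * ((a / s) * (b / t)) := by field_simp
    _ ≤ _ := by
        gcongr
        nlinarith [sq_nonneg (a / s - b / t), sq_nonneg (a / s), sq_nonneg (b / t)]

theorem not_summable_christoffelTerm (hT : ∀ p : ℝ[X], p ≠ 0 → 0 < T (p ^ 2))
    (hcar : ¬ Summable fun d : ℕ =>
      T (Polynomial.X ^ (2 * (d + 1))) ^ (-(1 : ℝ) / (2 * (d + 1)))) {z : ℂ} (hz : z.im ≠ 0) :
    ¬ Summable (christoffelTerm T z) := by
  intro hsum
  have hratio : Summable fun n => √(T (orthPoly T n ^ 2) / T (orthPoly T (n + 1) ^ 2)) :=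
    Summable.of_nonneg_of_le (fun _ => Real.sqrt_nonneg _) (sqrt_ratio_le_christoffelTerm hT hz)
      ((hsum.add ((summable_nat_add_iff 1).2 hsum)).mul_left _)
  refine hcar (Summable.of_nonneg_of_le (fun d => ?_) (fun d => ?_)
    (summable_rpow_neg_of_summable_sqrt_ratio (orthPoly_sq_pos hT) hratio))
  · exact Real.rpow_nonneg ((orthPoly_sq_pos hT _).le.trans (orthPoly_sq_le hT _)) _
  · exact Real.rpow_le_rpow_of_nonpos (orthPoly_sq_pos hT _) (orthPoly_sq_le hT _)
      (div_nonpos_of_nonpos_of_nonneg (by norm_num) (by positivity))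

end Christoffel

section SmallNorm

variable {T : ℝ[X] →ₗ[ℝ] ℝ}

lemma exists_aeval_eq_one_map_sq_eq (hT : ∀ p : ℝ[X], p ≠ 0 → 0 < T (p ^ 2)) (z : ℂ) {N : ℕ}
    (hN : 0 < ∑ k ∈ range N, christoffelTerm T z k) :
    ∃ A B : ℝ[X], Polynomial.aeval z A + Complex.I * Polynomial.aeval z B = 1 ∧
      T (A ^ 2) + T (B ^ 2) = (∑ k ∈ range N, christoffelTerm T z k)⁻¹ := by
  set L := ∑ k ∈ range N, christoffelTerm T z k
  set w : ℕ → ℂ := fun k => Polynomial.aeval z (orthPoly T k)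
  have hpos := orthPoly_sq_pos hT
  set h : ℕ → ℝ := fun k => T (orthPoly T k ^ 2)
  refine ⟨∑ k ∈ range N, Polynomial.C ((w k).re / (h k * L)) * orthPoly T k,
    ∑ k ∈ range N, Polynomial.C (-(w k).im / (h k * L)) * orthPoly T k, ?_, ?_⟩
  · have hterm : ∀ k, Polynomial.aeval z (Polynomial.C ((w k).re / (h k * L)) * orthPoly T k) +
        Complex.I * Polynomial.aeval z (Polynomial.C (-(w k).im / (h k * L)) * orthPoly T k) =
        ((christoffelTerm T z k / L : ℝ) : ℂ) := by
      intro k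
      have hconj : ((w k).re - (w k).im * Complex.I) * w k = (Complex.normSq (w k) : ℂ) := by
        apply Complex.ext
        · simp [Complex.normSq_apply]
        · simp [mul_comm]
      rw [map_mul, map_mul, Polynomial.aeval_C, Polynomial.aeval_C, Complex.coe_algebraMap]
      change _ * w k + Complex.I * (_ * w k) = ((Complex.normSq (w k) / h k / L : ℝ) : ℂ)
      push_cast
      linear_combination hconj / (h k * L)
    rw [map_sum, map_sum, mul_sum, ← sum_add_distrib, sum_congr rfl fun k _ => hterm k,
      ← Complex.ofReal_sum, ← sum_div, div_self hN.ne', Complex.ofReal_one]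
  · rw [map_sum_C_mul_orthPoly_sq fun n => (hpos n).ne', map_sum_C_mul_orthPoly_sq fun n =>
      (hpos n).ne', ← sum_add_distrib]
    have hterm : ∀ k, ((w k).re / (h k * L)) ^ 2 * h k + (-(w k).im / (h k * L)) ^ 2 * h k =
        christoffelTerm T z k / L ^ 2 := by
      intro k
      have hk : h k ≠ 0 := (hpos k).ne'
      change _ = Complex.normSq (w k) / h k / L ^ 2
      rw [Complex.normSq_apply]
      field_simp
    rw [sum_congr rfl fun k _ => hterm k, ← sum_div, sq, div_mul_cancel_left₀ hN.ne']

lemma exists_aeval_ne_zero_of_map_sq_eq_zero (hT : ∀ p : ℝ[X], 0 ≤ T (p ^ 2)) {z : ℂ}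
    (hz : z.im ≠ 0) {p : ℝ[X]} (hp : p ≠ 0) (hTp : T (p ^ 2) = 0) :
    ∃ r : ℝ[X], Polynomial.aeval z r ≠ 0 ∧ T (r ^ 2) = 0 := by
  induction hn : p.natDegree using Nat.strong_induction_on generalizing p with
  | _ n ih =>
    by_cases hpz : Polynomial.aeval z p = 0
    swap
    · exact ⟨p, hpz, hTp⟩
    obtain ⟨r, hr⟩ := p.quadratic_dvd_of_aeval_eq_zero_im_ne_zero hpz hz
    have hr₀ : r ≠ 0 := by rintro rfl; simp [hp] at hr
    have hdeg : (Polynomial.X ^ 2 - Polynomial.C (2 * z.re) * Polynomial.X +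
        Polynomial.C (‖z‖ ^ 2) : ℝ[X]).natDegree = 2 := by compute_degree!
    have hlt : r.natDegree < n := by
      rw [← hn, hr, Polynomial.natDegree_mul (Polynomial.ne_zero_of_natDegree_gt (n := 0)
        (by rw [hdeg]; norm_num)) hr₀, hdeg]
      omega
    have hmul : p * r = ((Polynomial.X - Polynomial.C z.re) * r) ^ 2 + (z.im ^ 2) • r ^ 2 := by
      rw [hr, Polynomial.smul_eq_C_mul, ← Complex.normSq_eq_norm_sq, Complex.normSq_apply]
      simp only [map_add, map_mul, map_ofNat, map_pow]
      ring
    have hzero : T (p * r) = 0 := by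
      have hCS := sq_map_mul_le hT p r
      rw [hTp, zero_mul] at hCS
      exact pow_eq_zero_iff two_ne_zero |>.1 (le_antisymm hCS (sq_nonneg _))
    refine ih _ hlt hr₀ (le_antisymm ?_ (hT r)) rfl
    rw [hmul, map_add, map_smul, smul_eq_mul] at hzero
    have him : 0 < z.im ^ 2 := by positivity
    nlinarith [hT ((Polynomial.X - Polynomial.C z.re) * r)]

/-- The infimum of `T (A ^ 2) + T (B ^ 2)` over all such `A`, `B` is the Christoffel function of `T`
at `z`. -/
theorem exists_aeval_eq_one_map_sq_lt (hT : ∀ p : ℝ[X], 0 ≤ T (p ^ 2))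
    (hcar : (∀ p : ℝ[X], p ≠ 0 → 0 < T (p ^ 2)) → ¬ Summable fun d : ℕ =>
      T (Polynomial.X ^ (2 * (d + 1))) ^ (-(1 : ℝ) / (2 * (d + 1)))) {z : ℂ} (hz : z.im ≠ 0)
    {ε : ℝ} (hε : 0 < ε) :
    ∃ A B : ℝ[X], Polynomial.aeval z A + Complex.I * Polynomial.aeval z B = 1 ∧
      T (A ^ 2) + T (B ^ 2) < ε := by
  by_cases hpos : ∀ p : ℝ[X], p ≠ 0 → 0 < T (p ^ 2)
  · obtain ⟨N, hN⟩ : ∃ N, ε⁻¹ < ∑ k ∈ range N, christoffelTerm T z k := by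
      by_contra! hle
      exact not_summable_christoffelTerm hpos (hcar hpos) hz
        (summable_of_sum_range_le (christoffelTerm_nonneg hpos z) hle)
    obtain ⟨A, B, hAB, hT⟩ := exists_aeval_eq_one_map_sq_eq hpos z ((inv_pos.2 hε).trans hN)
    exact ⟨A, B, hAB, hT.trans_lt (inv_lt_of_inv_lt₀ hε hN)⟩
  · push Not at hpos
    obtain ⟨p, hp, hTp⟩ := hpos
    obtain ⟨r, hrz, hr⟩ :=
      exists_aeval_ne_zero_of_map_sq_eq_zero hT hz hp (le_antisymm hTp (hT p))
    set c := (Polynomial.aeval z r)⁻¹ with hc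
    refine ⟨Polynomial.C c.re * r, Polynomial.C c.im * r, ?_, ?_⟩
    · rw [map_mul, map_mul, Polynomial.aeval_C, Polynomial.aeval_C, Complex.coe_algebraMap,
        ← mul_assoc, ← add_mul, mul_comm Complex.I, Complex.re_add_im, hc,
        inv_mul_cancel₀ hrz]
    · simpa only [mul_pow, ← map_pow, map_C_mul, hr, mul_zero, add_zero] using hε

end SmallNorm

lemma exists_map_add_I_mul_map (q : ℂ[X]) : ∃ A B : ℝ[X],
    q = A.map (algebraMap ℝ ℂ) + Polynomial.C Complex.I * B.map (algebraMap ℝ ℂ) := by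
  induction q using Polynomial.induction_on' with
  | add p q hp hq =>
    obtain ⟨A, B, rfl⟩ := hp
    obtain ⟨A', B', rfl⟩ := hq
    exact ⟨A + A', B + B', by simp only [Polynomial.map_add]; ring⟩
  | monomial n a =>
    refine ⟨Polynomial.monomial n a.re, Polynomial.monomial n a.im, ?_⟩
    rw [Polynomial.map_monomial, Polynomial.map_monomial, Polynomial.C_mul_monomial,
      ← map_add, mul_comm Complex.I]
    exact congrArg _ (Complex.re_add_im a).symm

/-- Dividing `A + iB - 1` by `X - z` exhibits `|1 - A - iB|` as `|s - z|` times the modulus of a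
complex polynomial on the real line. -/
lemma exists_resolvent_quotient {z : ℂ} {A B : ℝ[X]}
    (h : Polynomial.aeval z A + Complex.I * Polynomial.aeval z B = 1) :
    ∃ R₁ R₂ : ℝ[X], ∀ s : ℝ, ((s - z.re) ^ 2 + z.im ^ 2) * (R₁.eval s ^ 2 + R₂.eval s ^ 2) =
      (1 - A.eval s) ^ 2 + B.eval s ^ 2 := by
  set q : ℂ[X] := A.map (algebraMap ℝ ℂ) + Polynomial.C Complex.I * B.map (algebraMap ℝ ℂ) - 1
    with hq
  have hroot : q.IsRoot z := by simp [hq, h]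
  obtain ⟨r, hr⟩ := Polynomial.dvd_iff_isRoot.2 hroot
  obtain ⟨R₁, R₂, rfl⟩ := exists_map_add_I_mul_map r
  refine ⟨R₁, R₂, fun s => ?_⟩
  have haeval : ∀ p : ℝ[X], Polynomial.aeval (s : ℂ) p = (p.eval s : ℝ) :=
    Polynomial.aeval_algebraMap_apply_eq_algebraMap_eval s
  have heval := congrArg (fun p : ℂ[X] => Complex.normSq (p.eval (s : ℂ))) hr
  simp only [hq, Polynomial.eval_sub, Polynomial.eval_add, Polynomial.eval_map_algebraMap, haeval,
    Polynomial.eval_mul, Polynomial.eval_C, Polynomial.eval_one, Polynomial.eval_X,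
    Complex.normSq_apply, Complex.sub_re, Complex.add_re, Complex.ofReal_re, Complex.mul_re,
    Complex.I_re, Complex.I_im, Complex.ofReal_im, Complex.one_re, Complex.sub_im, Complex.add_im,
    Complex.mul_im, Complex.one_im, zero_mul, mul_zero, one_mul, sub_self, add_zero, zero_add,
    sub_zero, zero_sub, neg_mul, sub_neg_eq_add] at heval
  linear_combination -heval

/-! ### Moments of a measure on `ℝᵐ` -/

section Moments

variable {m : ℕ} {ν : Measure (Fin m → ℝ)}

lemma measurable_eval {σ : Type*} (h : MvPolynomial σ ℝ) :
    Measurable fun y : σ → ℝ => eval y h := by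
  simp only [eval_eq]
  fun_prop

lemma momentsFinite.integrable (hmom : momentsFinite ν) (h : MvPolynomial (Fin m) ℝ) :
    Integrable (fun y => eval y h) ν :=
  (integrable_norm_iff (measurable_eval h).aestronglyMeasurable).1 (hmom h)

lemma momentsFinite.isFiniteMeasure (hmom : momentsFinite ν) : IsFiniteMeasure ν := by
  have := hmom 1
  simp only [map_one, abs_one] at this
  exact (integrable_const_iff_isFiniteMeasure one_ne_zero).1 this

/-- Integration of polynomials against a measure with finite moments, as a linear functional. -/
def polyInt (hmom : momentsFinite ν) : MvPolynomial (Fin m) ℝ →ₗ[ℝ] ℝ where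
  toFun h := ∫ y, eval y h ∂ν
  map_add' h g := by
    simp only [map_add]
    exact integral_add (hmom.integrable h) (hmom.integrable g)
  map_smul' c h := by
    simp only [smul_eval, RingHom.id_apply, smul_eq_mul]
    exact integral_const_mul _ _

lemma polyInt_apply (hmom : momentsFinite ν) (h : MvPolynomial (Fin m) ℝ) :
    polyInt hmom h = ∫ y, eval y h ∂ν := rfl

lemma polyInt_sq_nonneg (hmom : momentsFinite ν) (h : MvPolynomial (Fin m) ℝ) :
    0 ≤ polyInt hmom (h ^ 2) :=
  integral_nonneg fun y => by simp [sq_nonneg]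

lemma sq_integral_pow_le (hmom : momentsFinite ν) (j : Fin m) (k : ℕ) :
    (∫ y, y j ^ (2 * (k + 1)) ∂ν) ^ 2 ≤
      (∫ y, y j ^ (2 * k) ∂ν) * ∫ y, y j ^ (2 * (k + 2)) ∂ν := by
  have h := sq_map_mul_le (polyInt_sq_nonneg hmom) (X j ^ k) (X j ^ (k + 2))
  simp only [polyInt_apply, ← pow_add, ← pow_mul, map_pow, eval_X] at h
  rwa [show k + (k + 2) = 2 * (k + 1) by ring, mul_comm k 2, mul_comm (k + 2) 2] at h

end Moments

/-! ### Log-convex sequences -/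

section LogConvex

variable {t : ℕ → ℝ}

lemma pow_le_mul_pow_of_log_convex (h0 : ∀ k, 0 ≤ t k)
    (h : ∀ k, t (k + 1) ^ 2 ≤ t k * t (k + 2)) (k : ℕ) :
    t k ^ (k + 1) ≤ t 0 * t (k + 1) ^ k := by
  induction k with
  | zero => simp
  | succ k ih =>
    rcases (h0 (k + 1)).eq_or_lt with hz | hpos
    · rw [← hz, zero_pow (by omega)]
      exact mul_nonneg (h0 _) (pow_nonneg (h0 _) _)
    · refine le_of_mul_le_mul_left ?_ (pow_pos hpos k)
      calc t (k + 1) ^ k * t (k + 1) ^ (k + 2) = (t (k + 1) ^ 2) ^ (k + 1) := by ring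
        _ ≤ (t k * t (k + 2)) ^ (k + 1) := by gcongr; exact h k
        _ = t k ^ (k + 1) * t (k + 2) ^ (k + 1) := by ring
        _ ≤ (t 0 * t (k + 1) ^ k) * t (k + 2) ^ (k + 1) :=
            mul_le_mul_of_nonneg_right ih (pow_nonneg (h0 _) _)
        _ = t (k + 1) ^ k * (t 0 * t (k + 2) ^ (k + 1)) := by ring

lemma rpow_neg_le_of_log_convex (h0 : ∀ k, 0 ≤ t k)
    (h : ∀ k, t (k + 1) ^ 2 ≤ t k * t (k + 2)) {k : ℕ} (hk : 0 < k) (hpos : 0 < t k) :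
    t (k + 1) ^ (-(1 : ℝ) / (2 * (k + 1))) ≤
      max 1 (t 0) * t k ^ (-(1 : ℝ) / (2 * k)) := by
  have hl := pow_le_mul_pow_of_log_convex h0 h k
  have hpos' : 0 < t (k + 1) := (h0 _).lt_of_ne' fun hz => by
    rw [hz, zero_pow hk.ne', mul_zero] at hl
    exact hl.not_gt (pow_pos hpos _)
  have hkr : (1 : ℝ) ≤ k := by exact_mod_cast hk
  have hroot : t k ^ (1 / (2 * (k : ℝ))) ≤
      t 0 ^ (1 / (2 * (k : ℝ) * (k + 1))) * t (k + 1) ^ (1 / (2 * ((k : ℝ) + 1))) := by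
    have := Real.rpow_le_rpow (pow_nonneg hpos.le _) hl
      (show 0 ≤ 1 / (2 * (k : ℝ) * (k + 1)) by positivity)
    rw [Real.mul_rpow (h0 0) (pow_nonneg hpos'.le _), ← Real.rpow_natCast, ← Real.rpow_natCast,
      ← Real.rpow_mul hpos.le, ← Real.rpow_mul hpos'.le] at this
    convert this using 3
    · push_cast; field_simp
    · field_simp
  have hmax : t 0 ^ (1 / (2 * (k : ℝ) * (k + 1))) ≤ max 1 (t 0) := by
    refine rpow_le_max_one (h0 0) (by positivity) ?_
    rw [div_le_one (by positivity)]
    nlinarith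
  rw [neg_div, neg_div, Real.rpow_neg hpos.le, Real.rpow_neg hpos'.le,
    ← div_eq_mul_inv, le_div_iff₀ (by positivity), inv_mul_le_iff₀ (by positivity),
    mul_comm (t (k + 1) ^ _)]
  exact hroot.trans (by gcongr)

lemma summable_rpow_neg_of_log_convex (h0 : ∀ k, 0 ≤ t k)
    (h : ∀ k, t (k + 1) ^ 2 ≤ t k * t (k + 2)) (hpos : ∀ d, 0 < t (2 * (d + 1)))
    (hs : Summable fun d : ℕ => t (2 * (d + 1)) ^ (-(1 : ℝ) / (2 * (2 * (d + 1))))) :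
    Summable fun d : ℕ => t (d + 1) ^ (-(1 : ℝ) / (2 * (d + 1))) := by
  have hodd : Summable fun d : ℕ =>
      t (2 * (d + 1) + 1) ^ (-(1 : ℝ) / (2 * (2 * ((d : ℝ) + 1) + 1))) := by
    refine (hs.mul_left (max 1 (t 0))).of_nonneg_of_le
      (fun d => Real.rpow_nonneg (h0 _) _) fun d => ?_
    have hd : 0 < 2 * (d + 1) := by omega
    exact_mod_cast rpow_neg_le_of_log_convex h0 h hd (hpos d)
  refine Summable.even_add_odd ?_ ?_
  · rw [← summable_nat_add_iff 1]
    exact_mod_cast hodd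
  · refine hs.congr fun d => ?_
    rw [show 2 * (d + 1) = 2 * d + 1 + 1 by ring]
    push_cast
    ring_nf

end LogConvex

lemma rpow_neg_le_of_le_sqrt_mul {t T κ s : ℝ} (ht : 0 ≤ t) (hT : 0 < T) (hκ : 0 < κ)
    (h : T ≤ √t * κ) (hs : 1 ≤ s) : t ^ (-(1 : ℝ) / (2 * s)) ≤ max 1 κ * T ^ (-(1 : ℝ) / s) := by
  have hpow := Real.rpow_le_rpow_of_nonpos hT h (show -(1 : ℝ) / s ≤ 0 from
    div_nonpos_of_nonpos_of_nonneg (by norm_num) (by linarith))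
  rw [Real.mul_rpow (Real.sqrt_nonneg _) hκ.le, Real.sqrt_eq_rpow, ← Real.rpow_mul ht,
    neg_div s 1, Real.rpow_neg hκ.le, ← div_eq_mul_inv, div_le_iff₀ (by positivity)] at hpow
  have hmax : κ ^ (1 / s) ≤ max 1 κ :=
    rpow_le_max_one hκ.le (by positivity) ((div_le_one (by linarith)).2 hs)
  calc t ^ (-(1 : ℝ) / (2 * s)) = t ^ (1 / 2 * -(1 / s)) := by congr 1; field_simp
    _ ≤ T ^ (-(1 / s)) * κ ^ (1 / s) := hpow
    _ ≤ T ^ (-(1 / s)) * max 1 κ := by gcongr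
    _ = max 1 κ * T ^ (-(1 : ℝ) / s) := by rw [mul_comm, neg_div]

/-! ### Carleman's condition for weighted marginals -/

lemma eval_aeval_X {σ : Type*} (y : σ → ℝ) (j : σ) (p : ℝ[X]) :
    eval y (Polynomial.aeval (X j : MvPolynomial σ ℝ) p) = p.eval (y j) := by
  rw [Polynomial.aeval_def, Polynomial.hom_eval₂, eval_X]
  exact congrArg (fun φ : ℝ →+* ℝ => p.eval₂ φ (y j)) (RingHom.ext fun a => by simp)

section Marginal

variable {m : ℕ} {ν : Measure (Fin m → ℝ)}

/-- The functional `p ↦ ∫ p(y_j) W(y) dν` on univariate polynomials, that is, integration against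
the `j`-th marginal of `W ν`. -/
def coordInt (hmom : momentsFinite ν) (W : MvPolynomial (Fin m) ℝ) (j : Fin m) : ℝ[X] →ₗ[ℝ] ℝ :=
  polyInt hmom ∘ₗ LinearMap.mulRight ℝ W ∘ₗ
    (Polynomial.aeval (X j : MvPolynomial (Fin m) ℝ)).toLinearMap

lemma coordInt_apply (hmom : momentsFinite ν) (W : MvPolynomial (Fin m) ℝ) (j : Fin m)
    (p : ℝ[X]) : coordInt hmom W j p = ∫ y, p.eval (y j) * eval y W ∂ν := by
  simp [coordInt, polyInt_apply, eval_aeval_X]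

lemma coordInt_sq_nonneg (hmom : momentsFinite ν) {W : MvPolynomial (Fin m) ℝ}
    (hW : ∀ y, 0 ≤ eval y W) (j : Fin m) (p : ℝ[X]) : 0 ≤ coordInt hmom W j (p ^ 2) := by
  rw [coordInt_apply]
  exact integral_nonneg fun y => mul_nonneg (by simp [sq_nonneg]) (hW y)

lemma coordInt_X_pow_le (hmom : momentsFinite ν) (W : MvPolynomial (Fin m) ℝ) (j : Fin m)
    (d : ℕ) : coordInt hmom W j (Polynomial.X ^ (2 * d)) ≤
      √(∫ y, y j ^ (2 * (2 * d)) ∂ν) * √(polyInt hmom (W ^ 2)) := by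
  have h := sq_map_mul_le (polyInt_sq_nonneg hmom) (X j ^ (2 * d)) W
  rw [← Real.sqrt_mul' _ (polyInt_sq_nonneg hmom W), coordInt_apply]
  refine Real.le_sqrt_of_sq_le ?_
  simp only [polyInt_apply, map_mul, map_pow, eval_X, ← pow_mul, mul_comm _ 2] at h
  simpa only [polyInt_apply, map_pow, Polynomial.eval_pow, Polynomial.eval_X] using h

lemma Carleman.not_summable_coordInt (hcar : Carleman ν) (hmom : momentsFinite ν)
    (W : MvPolynomial (Fin m) ℝ) (j : Fin m)
    (hpos : ∀ p : ℝ[X], p ≠ 0 → 0 < coordInt hmom W j (p ^ 2)) :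
    ¬ Summable fun d : ℕ =>
      coordInt hmom W j (Polynomial.X ^ (2 * (d + 1))) ^ (-(1 : ℝ) / (2 * (d + 1))) := by
  intro hs
  have hT (d : ℕ) : 0 < coordInt hmom W j (Polynomial.X ^ (2 * (d + 1))) := by
    simpa only [← pow_mul, mul_comm] using hpos _ (pow_ne_zero (d + 1) Polynomial.X_ne_zero)
  have hle (d : ℕ) := coordInt_X_pow_le hmom W j (d + 1)
  have hκ : 0 < √(polyInt hmom (W ^ 2)) :=
    pos_of_mul_pos_right ((hT 0).trans_le (hle 0)) (Real.sqrt_nonneg _)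
  set t : ℕ → ℝ := fun k => ∫ y, y j ^ (2 * k) ∂ν
  have ht0 (k : ℕ) : 0 ≤ t k := integral_nonneg fun y => (even_two_mul k).pow_nonneg _
  have htpos (d : ℕ) : 0 < t (2 * (d + 1)) :=
    Real.sqrt_pos.1 (pos_of_mul_pos_left ((hT d).trans_le (hle d)) hκ.le)
  have hsum := summable_rpow_neg_of_log_convex ht0 (sq_integral_pow_le hmom j) htpos
  refine hcar j (hsum ?_)
  refine (hs.mul_left (max 1 (√(polyInt hmom (W ^ 2))))).of_nonneg_of_le
    (fun d => Real.rpow_nonneg (ht0 _) _) fun d => ?_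
  exact rpow_neg_le_of_le_sqrt_mul (ht0 _) (hT d) hκ (hle d) (by linarith [d.cast_nonneg (α := ℝ)])

end Marginal

/-! ### Resolvent weights -/

section Resolvent

lemma abs_le_one_add_sq (x : ℝ) : |x| ≤ 1 + x ^ 2 := by
  rw [abs_le]
  constructor <;> nlinarith [sq_nonneg (x - 1), sq_nonneg (x + 1)]

lemma abs_sq_add_sq_sub_two_mul_le {δ : ℝ} (hδ : 0 < δ) (α β : ℝ) :
    |α ^ 2 + β ^ 2 - 2 * α| ≤ δ + (1 + δ⁻¹) * (α ^ 2 + β ^ 2) := by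
  -- AM-GM: `2 |α| ≤ δ + δ⁻¹ α ^ 2`
  have hamgm : 2 * |α| ≤ δ + δ⁻¹ * α ^ 2 := by
    have : 0 ≤ δ⁻¹ * (δ - |α|) ^ 2 := by positivity
    rw [sub_sq, sq_abs, mul_add, mul_sub] at this
    field_simp at this ⊢
    linarith
  have hβ : 0 ≤ δ⁻¹ * β ^ 2 := by positivity
  calc |α ^ 2 + β ^ 2 - 2 * α| ≤ |α ^ 2 + β ^ 2| + |2 * α| := abs_sub _ _
    _ = α ^ 2 + β ^ 2 + 2 * |α| := by rw [abs_of_nonneg (by positivity), abs_mul, abs_two]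
    _ ≤ δ + (1 + δ⁻¹) * (α ^ 2 + β ^ 2) := by linarith

lemma resolvent_approx_le {Q F w s α β r₁ r₂ δ : ℝ} (hs : 0 < s) (hδ : 0 < δ) (hw0 : 0 ≤ w * s⁻¹)
    (hw1 : w * s⁻¹ ≤ 1) (hr : s * (r₁ ^ 2 + r₂ ^ 2) = (1 - α) ^ 2 + β ^ 2) :
    (Q * r₁) ^ 2 * F * w + (Q * r₂) ^ 2 * F * w ≤ Q ^ 2 * F * (w * s⁻¹) +
      (δ * (Q ^ 2 * (1 + F ^ 2)) + (1 + δ⁻¹) * ((α ^ 2 + β ^ 2) * (Q ^ 2 * (1 + F ^ 2)))) := by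
  have hsplit : (Q * r₁) ^ 2 * F * w + (Q * r₂) ^ 2 * F * w = Q ^ 2 * F * (w * s⁻¹) +
      Q ^ 2 * (w * s⁻¹) * (F * (α ^ 2 + β ^ 2 - 2 * α)) := by
    rw [show (Q * r₁) ^ 2 * F * w + (Q * r₂) ^ 2 * F * w =
      Q ^ 2 * F * (w * s⁻¹) * (s * (r₁ ^ 2 + r₂ ^ 2)) by field_simp, hr]
    ring
  have herror : Q ^ 2 * (w * s⁻¹) * (F * (α ^ 2 + β ^ 2 - 2 * α)) ≤
      Q ^ 2 * 1 * ((1 + F ^ 2) * (δ + (1 + δ⁻¹) * (α ^ 2 + β ^ 2))) := by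
    refine (mul_le_mul_of_nonneg_left (le_abs_self _) (by positivity)).trans ?_
    rw [abs_mul]
    gcongr
    exacts [abs_le_one_add_sq F, abs_sq_add_sq_sub_two_mul_le hδ α β]
  linarith

lemma nonneg_of_forall_neg_le {I M : ℝ} (hM : 0 ≤ M)
    (h : ∀ δ > 0, ∀ ε > 0, -I ≤ δ * M + (1 + δ⁻¹) * ε) : 0 ≤ I := by
  refine neg_nonpos.1 (le_of_forall_pos_le_add fun η hη => ?_)
  set δ := η / (2 * (M + 1)) with hδ
  have hδ0 : 0 < δ := by positivity
  have hδM : δ * M ≤ η / 2 := by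
    have : δ * (M + 1) = η / 2 := by rw [hδ]; field_simp
    linarith
  have hε : (1 + δ⁻¹) * (η / (2 * (1 + δ⁻¹))) = η / 2 := by field_simp
  linarith [h δ hδ0 (η / (2 * (1 + δ⁻¹))) (by positivity)]

variable {m : ℕ} {ν : Measure (Fin m → ℝ)} {f : MvPolynomial (Fin m) ℝ} {w : (Fin m → ℝ) → ℝ}

/-- A weight `0 ≤ w ≤ 1` for which `q ↦ ∫ q² f w dν` is nonnegative on polynomials. -/
structure IsPositiveWeight (ν : Measure (Fin m → ℝ)) (f : MvPolynomial (Fin m) ℝ)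
    (w : (Fin m → ℝ) → ℝ) : Prop where
  measurable : Measurable w
  nonneg : ∀ y, 0 ≤ w y
  le_one : ∀ y, w y ≤ 1
  integral_nonneg : ∀ q : MvPolynomial (Fin m) ℝ, 0 ≤ ∫ y, eval y (q ^ 2 * f) * w y ∂ν

lemma integrable_eval_mul_of_le_one (hmom : momentsFinite ν) (h : MvPolynomial (Fin m) ℝ)
    (hw : Measurable w) (h0 : ∀ y, 0 ≤ w y) (h1 : ∀ y, w y ≤ 1) :
    Integrable (fun y => eval y h * w y) ν :=
  (hmom.integrable h).mul_bdd (c := 1) hw.aestronglyMeasurable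
    (.of_forall fun y => by rw [Real.norm_of_nonneg (h0 y)]; exact h1 y)

lemma inv_sq_add_one_le_one (x : ℝ) : (x ^ 2 + 1)⁻¹ ≤ 1 :=
  inv_le_one_of_one_le₀ (le_add_of_nonneg_left (sq_nonneg x))

lemma IsPositiveWeight.neg_integral_mul_resolvent_le (hw : IsPositiveWeight ν f w)
    (hmom : momentsFinite ν) (j : Fin m) {a : ℝ} (q : MvPolynomial (Fin m) ℝ) {A B : ℝ[X]}
    (hAB : Polynomial.aeval (⟨a, 1⟩ : ℂ) A + Complex.I * Polynomial.aeval (⟨a, 1⟩ : ℂ) B = 1)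
    {δ : ℝ} (hδ : 0 < δ) :
    -∫ y, eval y (q ^ 2 * f) * (w y * ((y j - a) ^ 2 + 1)⁻¹) ∂ν ≤
      δ * ∫ y, eval y (q ^ 2 * (1 + f ^ 2)) ∂ν +
        (1 + δ⁻¹) * coordInt hmom (q ^ 2 * (1 + f ^ 2)) j (A ^ 2 + B ^ 2) := by
  obtain ⟨R₁, R₂, hR⟩ := exists_resolvent_quotient hAB
  simp only [one_pow] at hR
  set W := q ^ 2 * (1 + f ^ 2) with hW
  set P : ℝ[X] → MvPolynomial (Fin m) ℝ := fun p => Polynomial.aeval (X j) p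
  have hP (y : Fin m → ℝ) (p : ℝ[X]) : eval y (P p) = p.eval (y j) := eval_aeval_X y j p
  have hρ0 (y : Fin m → ℝ) : 0 ≤ w y * ((y j - a) ^ 2 + 1)⁻¹ :=
    mul_nonneg (hw.nonneg y) (by positivity)
  have hρ1 (y : Fin m → ℝ) : w y * ((y j - a) ^ 2 + 1)⁻¹ ≤ 1 :=
    mul_le_one₀ (hw.le_one y) (by positivity) (inv_sq_add_one_le_one _)
  have hintR (R : ℝ[X]) : Integrable (fun y => eval y ((q * P R) ^ 2 * f) * w y) ν :=
    integrable_eval_mul_of_le_one hmom _ hw.measurable hw.nonneg hw.le_one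
  have hintI : Integrable (fun y => eval y (q ^ 2 * f) * (w y * ((y j - a) ^ 2 + 1)⁻¹)) ν :=
    integrable_eval_mul_of_le_one hmom _ (hw.measurable.mul (by fun_prop)) hρ0 hρ1
  have hintW := (hmom.integrable W).const_mul δ
  have hintAB : Integrable (fun y => (1 + δ⁻¹) * ((A ^ 2 + B ^ 2).eval (y j) * eval y W)) ν := by
    simpa only [map_mul, hP] using (hmom.integrable (P (A ^ 2 + B ^ 2) * W)).const_mul (1 + δ⁻¹)
  have hmono := integral_mono ((hintR R₁).add (hintR R₂)) (hintI.add (hintW.add hintAB)) fun y => by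
    simpa [hP, hW] using resolvent_approx_le (by positivity) hδ (hρ0 y) (hρ1 y) (hR (y j))
  rw [integral_add' (hintR R₁) (hintR R₂), integral_add' hintI (hintW.add hintAB),
    integral_add' hintW hintAB, integral_const_mul, integral_const_mul, ← coordInt_apply hmom]
    at hmono
  linarith [hw.integral_nonneg (q * P R₁), hw.integral_nonneg (q * P R₂)]

lemma IsPositiveWeight.mul_resolvent (hw : IsPositiveWeight ν f w) (hcar : Carleman ν)
    (hmom : momentsFinite ν) (j : Fin m) (a : ℝ) :
    IsPositiveWeight ν f fun y => w y * ((y j - a) ^ 2 + 1)⁻¹ where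
  measurable := hw.measurable.mul (by fun_prop)
  nonneg y := mul_nonneg (hw.nonneg y) (by positivity)
  le_one y := mul_le_one₀ (hw.le_one y) (by positivity) (inv_sq_add_one_le_one _)
  integral_nonneg q := by
    have hW (y : Fin m → ℝ) : 0 ≤ eval y (q ^ 2 * (1 + f ^ 2)) := by
      simp only [map_mul, map_pow, map_add, map_one]
      positivity
    refine nonneg_of_forall_neg_le (MeasureTheory.integral_nonneg (μ := ν) hW) fun δ hδ ε hε => ?_
    obtain ⟨A, B, hAB, hsmall⟩ := exists_aeval_eq_one_map_sq_lt (coordInt_sq_nonneg hmom hW j)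
      (hcar.not_summable_coordInt hmom _ j) (z := ⟨a, 1⟩) one_ne_zero hε
    rw [← map_add] at hsmall
    exact (hw.neg_integral_mul_resolvent_le hmom j q hAB hδ).trans (by gcongr)

lemma IsPositiveWeight.mul_prod_resolvent (hw : IsPositiveWeight ν f w) (hcar : Carleman ν)
    (hmom : momentsFinite ν) (a : Fin m → ℝ) (s : Finset (Fin m)) :
    IsPositiveWeight ν f fun y => w y * ∏ j ∈ s, ((y j - a j) ^ 2 + 1)⁻¹ := by
  induction s using Finset.induction_on with
  | empty => simpa using hw
  | insert j s hj ih =>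
    simpa only [prod_insert hj, mul_comm (_ ⁻¹), mul_assoc] using ih.mul_resolvent hcar hmom j (a j)

lemma isPositiveWeight_prod_resolvent_pow (hcar : Carleman ν) (hmom : momentsFinite ν)
    (hpos : ∀ q : MvPolynomial (Fin m) ℝ, 0 ≤ ∫ y, eval y (q ^ 2 * f) ∂ν) (a : Fin m → ℝ)
    (N : ℕ) : IsPositiveWeight ν f fun y => (∏ j, ((y j - a j) ^ 2 + 1)⁻¹) ^ N := by
  induction N with
  | zero => exact ⟨by fun_prop, by simp, by simp, by simpa using hpos⟩
  | succ N ih => simpa only [pow_succ] using ih.mul_prod_resolvent hcar hmom a univ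

end Resolvent

/-! ### Peak functions -/

section Peak

variable {E : Type*} [TopologicalSpace E] [MeasurableSpace E] [BorelSpace E]
  {μ : Measure E} [IsFiniteMeasure μ] {ρ : E → ℝ} {a : E}

lemma integrable_pow_of_le_one (hρ : Continuous ρ) (hρ0 : ∀ y, 0 ≤ ρ y) (hρ1 : ∀ y, ρ y ≤ 1)
    (N : ℕ) : Integrable (fun y => ρ y ^ N) μ :=
  .of_bound (hρ.pow N).measurable.aestronglyMeasurable 1 <| .of_forall fun y => by
    rw [Real.norm_of_nonneg (pow_nonneg (hρ0 y) N)]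
    exact pow_le_one₀ (hρ0 y) (hρ1 y)

lemma pow_mul_measureReal_le_integral_pow (hρ : Continuous ρ) (hρ0 : ∀ y, 0 ≤ ρ y)
    (hρ1 : ∀ y, ρ y ≤ 1) {θ : ℝ} (hθ : 0 ≤ θ) (N : ℕ) :
    θ ^ N * μ.real {y | θ < ρ y} ≤ ∫ y, ρ y ^ N ∂μ := by
  have hmeas : MeasurableSet {y | θ < ρ y} := (isOpen_lt continuous_const hρ).measurableSet
  calc θ ^ N * μ.real {y | θ < ρ y} = ∫ _ in {y | θ < ρ y}, θ ^ N ∂μ := by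
        rw [setIntegral_const, smul_eq_mul, mul_comm]
    _ ≤ ∫ y in {y | θ < ρ y}, ρ y ^ N ∂μ :=
        setIntegral_mono_on integrableOn_const (integrable_pow_of_le_one hρ hρ0 hρ1 N).integrableOn
          hmeas fun y hy => pow_le_pow_left₀ hθ (le_of_lt hy) N
    _ ≤ ∫ y, ρ y ^ N ∂μ := setIntegral_le_integral (integrable_pow_of_le_one hρ hρ0 hρ1 N)
        (.of_forall fun y => pow_nonneg (hρ0 y) N)

lemma tendstoUniformlyOn_pow_div_integral (hρ : Continuous ρ) (hρ0 : ∀ y, 0 ≤ ρ y)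
    (hρ1 : ∀ y, ρ y ≤ 1) {V : Set E} {θ θ' : ℝ} (hθ0 : 0 ≤ θ) (hθ : ∀ y ∈ V, ρ y ≤ θ)
    (hθθ' : θ < θ') (hμ : 0 < μ.real {y | θ' < ρ y}) :
    TendstoUniformlyOn (fun (N : ℕ) y => (∫ z, ρ z ^ N ∂μ)⁻¹ * ρ y ^ N) 0 Filter.atTop V := by
  have hθ'0 : 0 < θ' := hθ0.trans_lt hθθ'
  have hbound : Filter.Tendsto (fun N : ℕ => (μ.real {y | θ' < ρ y})⁻¹ * (θ / θ') ^ N)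
      Filter.atTop (𝓝 0) := by
    simpa using (tendsto_pow_atTop_nhds_zero_of_lt_one (by positivity)
      ((div_lt_one hθ'0).2 hθθ')).const_mul (μ.real {y | θ' < ρ y})⁻¹
  refine Metric.tendstoUniformlyOn_iff.2 fun ε hε => ?_
  filter_upwards [hbound.eventually_lt_const hε] with N hN y hy
  have hI := pow_mul_measureReal_le_integral_pow (μ := μ) hρ hρ0 hρ1 hθ'0.le N
  have hφ : 0 ≤ (∫ z, ρ z ^ N ∂μ)⁻¹ * ρ y ^ N :=
    mul_nonneg (inv_nonneg.2 (le_trans (by positivity) hI)) (pow_nonneg (hρ0 y) N)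
  rw [Pi.zero_apply, dist_zero_left, Real.norm_of_nonneg hφ]
  calc (∫ z, ρ z ^ N ∂μ)⁻¹ * ρ y ^ N ≤ (θ' ^ N * μ.real {y | θ' < ρ y})⁻¹ * θ ^ N := by
        gcongr
        exacts [pow_nonneg (hρ0 y) N, hρ0 y, hθ y hy]
    _ = (μ.real {y | θ' < ρ y})⁻¹ * (θ / θ') ^ N := by rw [div_pow, mul_inv]; ring
    _ < ε := hN

lemma tendsto_integral_pow_peak (hρ : Continuous ρ) (hρ0 : ∀ y, 0 ≤ ρ y) (hρ1 : ∀ y, ρ y ≤ 1)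
    (hρa : ρ a = 1)
    (hpeak : ∀ U, IsOpen U → a ∈ U → ∃ θ, 0 ≤ θ ∧ θ < 1 ∧ ∀ y ∉ U, ρ y ≤ θ)
    (hμ : ∀ U, IsOpen U → a ∈ U → 0 < μ U) {g : E → ℝ} (hg : Integrable g μ)
    (hga : ContinuousAt g a) :
    Filter.Tendsto (fun N : ℕ => (∫ y, ρ y ^ N ∂μ)⁻¹ * ∫ y, ρ y ^ N * g y ∂μ)
      Filter.atTop (𝓝 (g a)) := by
  have hvol {θ : ℝ} (hθ : θ < 1) : 0 < μ.real {y | θ < ρ y} :=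
    ENNReal.toReal_pos (hμ _ (isOpen_lt continuous_const hρ) (hθ.trans_eq hρa.symm)).ne'
      (measure_ne_top _ _)
  have hI (N : ℕ) : 0 < ∫ y, ρ y ^ N ∂μ :=
    (mul_pos (pow_pos one_half_pos N) (hvol one_half_lt_one)).trans_le
      (pow_mul_measureReal_le_integral_pow hρ hρ0 hρ1 one_half_pos.le N)
  have hlim := tendsto_integral_peak_smul_of_integrable_of_tendsto (μ := μ) (x₀ := a)
    (φ := fun (N : ℕ) y => (∫ z, ρ z ^ N ∂μ)⁻¹ * ρ y ^ N) (l := Filter.atTop) (g := g) (a := g a)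
    MeasurableSet.univ Filter.univ_mem (measure_ne_top μ _)
    (.of_forall fun N y => mul_nonneg (inv_nonneg.2 (hI N).le) (pow_nonneg (hρ0 y) N))
    (fun U hU haU => ?_) ?_
    (.of_forall fun N => ((hρ.pow N).const_mul _).measurable.aestronglyMeasurable) hg hga
  · simpa only [smul_eq_mul, mul_assoc, integral_const_mul] using hlim
  · obtain ⟨θ, hθ0, hθ1, hθ⟩ := hpeak U hU haU
    obtain ⟨θ', hθθ', hθ'1⟩ := exists_between hθ1
    exact tendstoUniformlyOn_pow_div_integral hρ hρ0 hρ1 hθ0 hθ hθθ' (hvol hθ'1)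
  · simp [integral_const_mul, inv_mul_cancel₀ (hI _).ne']

end Peak

section PointwiseNonneg

variable {m : ℕ}

lemma prod_resolvent_le_of_dist_ge {a y : Fin m → ℝ} {r : ℝ} (hr : 0 < r) (hy : r ≤ dist y a) :
    ∏ j, ((y j - a j) ^ 2 + 1)⁻¹ ≤ (r ^ 2 + 1)⁻¹ := by
  obtain ⟨j, hj⟩ : ∃ j, r ≤ |y j - a j| := by
    by_contra! h
    exact hy.not_gt ((dist_pi_lt_iff hr).2 h)
  calc ∏ i, ((y i - a i) ^ 2 + 1)⁻¹ ≤ ((y j - a j) ^ 2 + 1)⁻¹ := by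
        rw [← mul_prod_erase univ _ (mem_univ j)]
        exact mul_le_of_le_one_right (by positivity)
          (prod_le_one (fun i _ => by positivity) fun i _ => inv_sq_add_one_le_one _)
    _ ≤ (r ^ 2 + 1)⁻¹ := by
        rw [← sq_abs (y j - a j)]
        gcongr

theorem eval_nonneg_of_integral_sq_nonneg {ν : Measure (Fin m → ℝ)} {Y : Set (Fin m → ℝ)}
    (hsupp : hasSupport ν Y) (hcar : Carleman ν) (hmom : momentsFinite ν)
    {f : MvPolynomial (Fin m) ℝ}
    (hpos : ∀ q : MvPolynomial (Fin m) ℝ, 0 ≤ ∫ y, eval y (q ^ 2 * f) ∂ν) {a : Fin m → ℝ}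
    (ha : a ∈ Y) : 0 ≤ eval a f := by
  have := hmom.isFiniteMeasure
  refine ge_of_tendsto' (tendsto_integral_pow_peak (μ := ν)
    (ρ := fun y => ∏ j, ((y j - a j) ^ 2 + 1)⁻¹) (a := a) (g := fun y => eval y f)
    (continuous_finsetProd _ fun j _ => Continuous.inv₀ (by fun_prop) fun y => by positivity)
    (fun y => by positivity) (fun y => prod_le_one (fun j _ => by positivity)
      fun j _ => inv_sq_add_one_le_one _) (by simp) (fun U hU haU => ?_)
    (fun U hU haU => hsupp.2 U hU ⟨a, haU, ha⟩) (hmom.integrable f)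
    (continuous_eval f).continuousAt) fun N => ?_
  · obtain ⟨r, hr, hrU⟩ := Metric.isOpen_iff.1 hU a haU
    exact ⟨(r ^ 2 + 1)⁻¹, by positivity, inv_lt_one_of_one_lt₀ (by nlinarith), fun y hy =>
      prod_resolvent_le_of_dist_ge hr (not_lt.1 fun h => hy (hrU h))⟩
  · have hN := (isPositiveWeight_prod_resolvent_pow hcar hmom hpos a N).integral_nonneg 1
    simp only [one_pow, one_mul, mul_comm (eval _ f)] at hN
    exact mul_nonneg (inv_nonneg.2 (integral_nonneg fun y => by positivity)) hN

end PointwiseNonneg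

/-! ### Riesz functionals of exponentially bounded sequences -/

section Riesz

variable {σ V : Type*} [AddCommGroup V] [Module ℝ V]

/-- The functional `f ↦ ∑ f_α s_α` on polynomials attached to a sequence `s` of moments. -/
def riesz : ((σ →₀ ℕ) → V) ≃ₗ[ℝ] (MvPolynomial σ ℝ →ₗ[ℝ] V) :=
  (basisMonomials σ ℝ).constr ℝ

lemma riesz_apply (s : (σ →₀ ℕ) → V) (f : MvPolynomial σ ℝ) :
    riesz s f = ∑ α ∈ f.support, coeff α f • s α := by
  rw [riesz, Module.Basis.constr_apply]
  rfl

lemma riesz_monomial (s : (σ →₀ ℕ) → V) (α : σ →₀ ℕ) (c : ℝ) :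
    riesz s (monomial α c) = c • s α := by
  have h := (basisMonomials σ ℝ).constr_basis ℝ s α
  rw [coe_basisMonomials] at h
  rw [← mul_one c, ← smul_eq_mul, ← smul_monomial, map_smul, riesz, h, smul_eq_mul, mul_one]

/-- The sequence of the functional `f ↦ L(x_l f)`, where `L` is the functional of `s`. -/
def shift {V : Type*} (l : σ) (s : (σ →₀ ℕ) → V) (α : σ →₀ ℕ) : V :=
  s (Finsupp.single l 1 + α)

lemma riesz_shift (l : σ) (s : (σ →₀ ℕ) → V) (f : MvPolynomial σ ℝ) :
    riesz (shift l s) f = riesz s (X l * f) := by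
  induction f using MvPolynomial.induction_on' with
  | monomial α c =>
    rw [riesz_monomial, X, monomial_mul, riesz_monomial, one_mul, shift]
  | add f g hf hg => simp only [mul_add, map_add, hf, hg]

end Riesz

section ExpBound

variable {σ V : Type*} {r : ℝ}

lemma isBigO_comp_add_left [Norm V] {s : (σ →₀ ℕ) → V} (hs : s =O[⊤] fun α => r ^ α.degree)
    (β : σ →₀ ℕ) : (fun α => s (β + α)) =O[⊤] fun α => r ^ α.degree := by
  obtain ⟨B, hB⟩ := Asymptotics.isBigO_top.1 hs
  refine Asymptotics.isBigO_top.2 ⟨B * ‖r ^ β.degree‖, fun α => ?_⟩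
  simpa only [map_add, pow_add, norm_mul, mul_assoc] using hB (β + α)

lemma isBigO_shift [Norm V] {s : (σ →₀ ℕ) → V} (hs : s =O[⊤] fun α => r ^ α.degree) (l : σ) :
    shift l s =O[⊤] fun α => r ^ α.degree :=
  isBigO_comp_add_left hs (Finsupp.single l 1)

lemma isBigO_riesz_mul_monomial [NormedAddCommGroup V] [NormedSpace ℝ V] {s : (σ →₀ ℕ) → V}
    (hs : s =O[⊤] fun α => r ^ α.degree) (h : MvPolynomial σ ℝ) :
    (fun α => riesz s (h * monomial α 1)) =O[⊤] fun α => r ^ α.degree := by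
  induction h using MvPolynomial.induction_on' with
  | monomial β c =>
    simp only [monomial_mul, riesz_monomial, mul_one]
    exact (isBigO_comp_add_left hs β).const_smul_left c
  | add f g hf hg => simpa only [add_mul, map_add] using hf.add hg

lemma le_one_of_sq_le_succ {x : ℕ → ℝ} {B : ℝ} (hsq : ∀ k, x k ^ 2 ≤ x (k + 1))
    (hB : ∀ k, x k ≤ B) : x 0 ≤ 1 := by
  by_contra! h
  have hpow (k : ℕ) : x 0 ^ 2 ^ k ≤ x k := by
    induction k with
    | zero => simp
    | succ k ih =>
      rw [pow_succ, pow_mul]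
      exact (pow_le_pow_left₀ (by positivity) ih 2).trans (hsq k)
  obtain ⟨k, hk⟩ := pow_unbounded_of_one_lt B h
  have hk' : x 0 ^ k ≤ x 0 ^ 2 ^ k := pow_le_pow_right₀ h.le Nat.lt_two_pow_self.le
  linarith [hpow k, hB k]

lemma abs_map_le_of_abs_map_pow_le {R : Type*} [CommRing R] [Algebra ℝ R] {T : R →ₗ[ℝ] ℝ}
    (hT : ∀ p, 0 ≤ T (p ^ 2)) {p : R} {ρ B : ℝ} (hρ : 0 < ρ)
    (hB : ∀ k : ℕ, |T (p ^ k)| ≤ B * ρ ^ k) : |T p| ≤ T 1 * ρ := by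
  have hsq (q : R) : T q ^ 2 ≤ T 1 * |T (q ^ 2)| := by
    simpa [abs_of_nonneg (hT q)] using sq_map_mul_le hT 1 q
  have hT1 : 0 ≤ T 1 := by simpa using hT 1
  rcases hT1.eq_or_lt with h0 | h0
  · have := hsq p
    rw [← h0, zero_mul, sq_nonpos_iff] at this
    rw [← h0, this, abs_zero, zero_mul]
  -- `x k = |T (p ^ 2 ^ k)| / (T 1 * ρ ^ 2 ^ k)` at least squares at each step but stays bounded
  have hone := le_one_of_sq_le_succ (x := fun k => |T (p ^ 2 ^ k)| / (T 1 * ρ ^ 2 ^ k))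
    (B := B / T 1) (fun k => ?_) fun k => ?_
  · simpa [div_le_one (mul_pos h0 hρ)] using hone
  · rw [div_pow, sq_abs, pow_succ 2 k, pow_mul, pow_mul, div_le_div_iff₀ (by positivity)
      (by positivity)]
    nlinarith [mul_le_mul_of_nonneg_right (hsq (p ^ 2 ^ k))
      (by positivity : 0 ≤ T 1 * (ρ ^ 2 ^ k) ^ 2)]
  · rw [div_le_div_iff₀ (by positivity) h0]
    nlinarith [mul_le_mul_of_nonneg_right (hB (2 ^ k)) h0.le]

end ExpBound

/-! ### Positive matrix sequences -/

section QuadraticForms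

variable {ι : Type*} [Fintype ι]

lemma dotProduct_mulVec_eq_sum (M : Matrix ι ι ℝ) (v : ι → ℝ) :
    star v ⬝ᵥ M *ᵥ v = ∑ i, ∑ j, v i * v j * M i j := by
  simp only [dotProduct, Matrix.mulVec, Pi.star_apply, star_trivial, Finset.mul_sum]
  exact sum_congr rfl fun i _ => sum_congr rfl fun j _ => by ring

lemma posSemidef_iff_sum_nonneg {M : Matrix ι ι ℝ} :
    M.PosSemidef ↔ (∀ i j, M i j = M j i) ∧ ∀ v : ι → ℝ, 0 ≤ ∑ i, ∑ j, v i * v j * M i j := by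
  simp only [Matrix.posSemidef_iff_dotProduct_mulVec, dotProduct_mulVec_eq_sum]
  refine and_congr_left fun _ => ?_
  simp only [Matrix.IsHermitian, ← Matrix.ext_iff, conjTranspose_apply, star_trivial]
  exact forall_comm

lemma quadForm_single_add_single [DecidableEq ι] (i j : ι) (b : ℝ) (M : ι → ι → ℝ) :
    ∑ k, ∑ l, (Pi.single i 1 + Pi.single j b : ι → ℝ) k *
      (Pi.single i 1 + Pi.single j b : ι → ℝ) l * M k l =
      M i i + b * M i j + b * M j i + b * b * M j j := by
  simp only [Pi.add_apply, add_mul, mul_add, sum_add_distrib]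
  simp [Pi.single_apply]
  ring

lemma quadForm_single [DecidableEq ι] (i : ι) (M : ι → ι → ℝ) :
    ∑ k, ∑ l, (Pi.single i 1 : ι → ℝ) k * (Pi.single i 1 : ι → ℝ) l * M k l = M i i := by
  simp [Pi.single_apply]

variable {M A : ι → ι → ℝ} {c : ℝ}

lemma abs_diag_le_of_quadForm_le
    (h : ∀ v : ι → ℝ, |∑ i, ∑ j, v i * v j * M i j| ≤ c * ∑ i, ∑ j, v i * v j * A i j) (i : ι) :
    |M i i| ≤ c * A i i := by
  classical simpa only [quadForm_single] using h (Pi.single i 1)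

lemma abs_apply_le_of_quadForm_le (hM : ∀ i j, M i j = M j i)
    (h : ∀ v : ι → ℝ, |∑ i, ∑ j, v i * v j * M i j| ≤ c * ∑ i, ∑ j, v i * v j * A i j) (i j : ι) :
    |M i j| ≤ c * ∑ k, A k k := by
  classical
  have hdiag (k : ι) : c * A k k ≤ c * ∑ k, A k k := by
    rw [mul_sum]
    exact single_le_sum (f := fun k => c * A k k)
      (fun k _ => (abs_nonneg _).trans (abs_diag_le_of_quadForm_le h k)) (mem_univ k)
  have hadd := h (Pi.single i 1 + Pi.single j 1)
  have hsub := h (Pi.single i 1 + Pi.single j (-1))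
  rw [quadForm_single_add_single, quadForm_single_add_single, abs_le] at hadd hsub
  rw [abs_le]
  constructor <;> linarith [hdiag i, hdiag j, hM i j, hadd.1, hadd.2, hsub.1, hsub.2]

end QuadraticForms

section PosSeq

variable {σ ι : Type*} [Fintype ι] {r : ℝ} {S T : (σ →₀ ℕ) → ι → ι → ℝ}

/-- Symmetric matrix sequences with nonnegative moment form and `S_α = O(r ^ |α|)`. -/
structure IsPosSeq (r : ℝ) (S : (σ →₀ ℕ) → ι → ι → ℝ) : Prop where
  symm : ∀ α i j, S α i j = S α j i
  nonneg : ∀ g : ι → MvPolynomial σ ℝ, 0 ≤ ∑ i, ∑ j, riesz S (g i * g j) i j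
  isBigO : S =O[⊤] fun α => r ^ α.degree

lemma IsPosSeq.add (hS : IsPosSeq r S) (hT : IsPosSeq r T) : IsPosSeq r (S + T) where
  symm α i j := by simp only [Pi.add_apply, hS.symm α i j, hT.symm α i j]
  nonneg g := by
    simpa only [map_add, LinearMap.add_apply, Pi.add_apply, sum_add_distrib] using
      add_nonneg (hS.nonneg g) (hT.nonneg g)
  isBigO := hS.isBigO.add hT.isBigO

lemma IsPosSeq.smul (hS : IsPosSeq r S) {c : ℝ} (hc : 0 ≤ c) : IsPosSeq r (c • S) where
  symm α i j := by simp only [Pi.smul_apply, hS.symm α i j]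
  nonneg g := by
    simpa only [map_smul, LinearMap.smul_apply, Pi.smul_apply, smul_eq_mul, ← mul_sum] using
      mul_nonneg hc (hS.nonneg g)
  isBigO := hS.isBigO.const_smul_left c

/-- The functional `f ↦ ∑ L_{ij}(g_i g_j f)`. -/
def quadFunctional (S : (σ →₀ ℕ) → ι → ι → ℝ) (g : ι → MvPolynomial σ ℝ) :
    MvPolynomial σ ℝ →ₗ[ℝ] ℝ :=
  ∑ i, ∑ j, LinearMap.proj j ∘ₗ LinearMap.proj i ∘ₗ riesz S ∘ₗ LinearMap.mulLeft ℝ (g i * g j)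

lemma quadFunctional_apply (S : (σ →₀ ℕ) → ι → ι → ℝ) (g : ι → MvPolynomial σ ℝ)
    (f : MvPolynomial σ ℝ) :
    quadFunctional S g f = ∑ i, ∑ j, riesz S (g i * g j * f) i j := by
  simp [quadFunctional, LinearMap.sum_apply, mul_assoc]

lemma quadFunctional_C_monomial (S : (σ →₀ ℕ) → ι → ι → ℝ) (v : ι → ℝ) (α : σ →₀ ℕ) :
    quadFunctional S (fun i => C (v i)) (monomial α 1) = ∑ i, ∑ j, v i * v j * S α i j := by
  simp only [quadFunctional_apply, ← C_mul, C_mul_monomial, riesz_monomial, mul_one,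
    Pi.smul_apply, smul_eq_mul]

lemma IsPosSeq.quadFunctional_sq_nonneg (hS : IsPosSeq r S) (g : ι → MvPolynomial σ ℝ)
    (f : MvPolynomial σ ℝ) : 0 ≤ quadFunctional S g (f ^ 2) := by
  simpa only [quadFunctional_apply, mul_mul_mul_comm, sq] using hS.nonneg fun i => g i * f

lemma IsPosSeq.abs_quadFunctional_le (hS : IsPosSeq r S) (hr : 0 < r) (g : ι → MvPolynomial σ ℝ)
    (α : σ →₀ ℕ) :
    |quadFunctional S g (monomial α 1)| ≤ quadFunctional S g 1 * r ^ α.degree := by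
  have hO : (fun β => quadFunctional S g (monomial β 1)) =O[⊤] fun β => r ^ β.degree := by
    simp only [quadFunctional_apply]
    exact .fun_sum fun i _ => .fun_sum fun j _ => Asymptotics.isBigO_pi.1
      (Asymptotics.isBigO_pi.1 (isBigO_riesz_mul_monomial hS.isBigO (g i * g j)) i) j
  obtain ⟨B, hB⟩ := Asymptotics.isBigO_top.1 hO
  refine abs_map_le_of_abs_map_pow_le (hS.quadFunctional_sq_nonneg g) (by positivity)
    (B := B) fun k => ?_
  rw [monomial_pow, one_pow, ← pow_mul, mul_comm α.degree]
  simpa [abs_of_pos hr] using hB (k • α)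

lemma IsPosSeq.abs_quadForm_le (hS : IsPosSeq r S) (hr : 0 < r) (α : σ →₀ ℕ) (v : ι → ℝ) :
    |∑ i, ∑ j, v i * v j * S α i j| ≤ r ^ α.degree * ∑ i, ∑ j, v i * v j * S 0 i j := by
  have h := hS.abs_quadFunctional_le hr (fun i => C (v i)) α
  rwa [← C_1, C_apply, quadFunctional_C_monomial, quadFunctional_C_monomial, mul_comm] at h

lemma IsPosSeq.posSemidef_zero (hS : IsPosSeq r S) : (Matrix.of (S 0)).PosSemidef := by
  refine posSemidef_iff_sum_nonneg.2 ⟨hS.symm 0, fun v => ?_⟩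
  have h := hS.quadFunctional_sq_nonneg (fun i => C (v i)) 1
  rwa [one_pow, ← C_1, C_apply, quadFunctional_C_monomial] at h

lemma IsPosSeq.abs_apply_le (hS : IsPosSeq r S) (hr : 0 < r) (α : σ →₀ ℕ)
    (i j : ι) : |S α i j| ≤ r ^ α.degree * ∑ k, S 0 k k :=
  abs_apply_le_of_quadForm_le (hS.symm α) (hS.abs_quadForm_le hr α) i j

lemma IsPosSeq.trace_nonneg (hS : IsPosSeq r S) : 0 ≤ ∑ k, S 0 k k :=
  hS.posSemidef_zero.trace_nonneg

lemma IsPosSeq.eq_zero_of_trace_eq_zero (hS : IsPosSeq r S) (hr : 0 < r)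
    (h : ∑ k, S 0 k k = 0) : S = 0 := by
  ext α i j
  simpa [h] using hS.abs_apply_le hr α i j

lemma IsPosSeq.add_smul_shift (hS : IsPosSeq r S) (hr : 0 < r) (l : σ) {c : ℝ}
    (hc : |c| * r ≤ 1) : IsPosSeq r (S + c • shift l S) where
  symm α i j := by
    simp only [Pi.add_apply, Pi.smul_apply, shift, hS.symm α i j, hS.symm (_ + α) i j]
  nonneg g := by
    have hle := hS.abs_quadFunctional_le hr g (Finsupp.single l 1)
    rw [Finsupp.degree_single, pow_one] at hle
    have hone : 0 ≤ quadFunctional S g 1 := by simpa using hS.quadFunctional_sq_nonneg g 1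
    have heq : ∑ i, ∑ j, riesz (S + c • shift l S) (g i * g j) i j =
        quadFunctional S g 1 + c * quadFunctional S g (X l) := by
      simp only [quadFunctional_apply, map_add, map_smul, LinearMap.add_apply,
        LinearMap.smul_apply, Pi.add_apply, Pi.smul_apply, smul_eq_mul, riesz_shift,
        sum_add_distrib, mul_sum, mul_one, mul_comm (X l)]
    have habs : |c * quadFunctional S g (X l)| ≤ 1 * quadFunctional S g 1 :=
      calc |c * quadFunctional S g (X l)| ≤ |c| * (quadFunctional S g 1 * r) := by
            rw [abs_mul]; gcongr; exact hle
        _ = |c| * r * quadFunctional S g 1 := by ring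
        _ ≤ 1 * quadFunctional S g 1 := by gcongr
    rw [heq]
    linarith [(abs_le.1 habs).1]
  isBigO := hS.isBigO.add ((isBigO_shift hS.isBigO l).const_smul_left c)

end PosSeq

/-! ### Representing measures over the extreme points of a compact convex set -/

section Choquet

variable {Z : Type*} [TopologicalSpace Z] [CompactSpace Z] [MeasurableSpace Z]

lemma convex_range_integral [OpensMeasurableSpace Z] {κ : Type*} {F : κ → Z → ℝ}
    (hF : ∀ k, Continuous (F k)) :
    Convex ℝ (Set.range fun (μ : ProbabilityMeasure Z) k => ∫ z, F k z ∂(μ : Measure Z)) := by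
  rintro _ ⟨μ₁, rfl⟩ _ ⟨μ₂, rfl⟩ a b ha hb hab
  let μ : Measure Z :=
    ENNReal.ofReal a • (μ₁ : Measure Z) + ENNReal.ofReal b • (μ₂ : Measure Z)
  have hμ : IsProbabilityMeasure μ := ⟨by
    simp [μ, ← ENNReal.ofReal_add ha hb, hab]⟩
  have hint (μ' : ProbabilityMeasure Z) (c : ℝ) (k : κ) :
      Integrable (F k) (ENNReal.ofReal c • (μ' : Measure Z)) :=
    ((BoundedContinuousFunction.mkOfCompact ⟨F k, hF k⟩).integrable _).smul_measure
      ENNReal.ofReal_ne_top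
  refine ⟨⟨μ, hμ⟩, funext fun k => ?_⟩
  simp only [ProbabilityMeasure.coe_mk, μ, Pi.add_apply, Pi.smul_apply]
  rw [integral_add_measure (hint μ₁ a k) (hint μ₂ b k), integral_smul_measure,
    integral_smul_measure, ENNReal.toReal_ofReal ha, ENNReal.toReal_ofReal hb]

lemma isCompact_range_integral [T2Space Z] [BorelSpace Z] {κ : Type*} {F : κ → Z → ℝ}
    (hF : ∀ k, Continuous (F k)) :
    IsCompact (Set.range fun (μ : ProbabilityMeasure Z) k => ∫ z, F k z ∂(μ : Measure Z)) :=
  isCompact_range <| continuous_pi fun k =>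
    ProbabilityMeasure.continuous_integral_boundedContinuousFunction
      (BoundedContinuousFunction.mkOfCompact ⟨F k, hF k⟩)

theorem exists_integral_eq_of_extremePoints_subset_range [T2Space Z] [BorelSpace Z]
    {E : Type*} [AddCommGroup E] [Module ℝ E] [TopologicalSpace E] [T2Space E]
    [IsTopologicalAddGroup E] [ContinuousSMul ℝ E] [LocallyConvexSpace ℝ E] {K : Set E}
    (hK : IsCompact K) (hKc : Convex ℝ K) {F : Z → E} (hF : Continuous F)
    (hext : K.extremePoints ℝ ⊆ Set.range F) {s : E} (hs : s ∈ K) :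
    ∃ μ : ProbabilityMeasure Z, ∀ φ : E →L[ℝ] ℝ, ∫ z, φ (F z) ∂(μ : Measure Z) = φ s := by
  have hφF (φ : E →L[ℝ] ℝ) : Continuous fun z => φ (F z) := φ.continuous.comp hF
  let Θ (μ : ProbabilityMeasure Z) (φ : E →L[ℝ] ℝ) : ℝ := ∫ z, φ (F z) ∂(μ : Measure Z)
  let ev : E →ₗ[ℝ] (E →L[ℝ] ℝ) → ℝ := LinearMap.pi fun φ => φ.toLinearMap
  have hev : Continuous ev := continuous_pi fun φ => φ.continuous
  have hclosed : IsClosed (ev ⁻¹' Set.range Θ) :=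
    (isCompact_range_integral hφF).isClosed.preimage hev
  have hconvex : Convex ℝ (ev ⁻¹' Set.range Θ) := (convex_range_integral hφF).linear_preimage ev
  have hdirac : K.extremePoints ℝ ⊆ ev ⁻¹' Set.range Θ := by
    rintro t ht
    obtain ⟨z, rfl⟩ := hext ht
    exact ⟨⟨Measure.dirac z, inferInstance⟩, funext fun φ => integral_dirac' _ _
      (hφF φ).stronglyMeasurable⟩
  rw [← closure_convexHull_extremePoints hK hKc] at hs
  obtain ⟨μ, hμ⟩ := closure_minimal (convexHull_min hdirac hconvex) hclosed hs
  exact ⟨μ, congrFun hμ⟩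

end Choquet

/-! ### Extreme normalized positive sequences -/

section Extreme

variable {σ ι : Type*} [Fintype ι] {r : ℝ} {S P M : (σ →₀ ℕ) → ι → ι → ℝ}

/-- The positive sequences of radius `r` whose zeroth moment has trace one, a compact base of the
cone of all positive sequences of that radius. -/
def normalizedSeqs (σ ι : Type*) [Fintype ι] (r : ℝ) : Set ((σ →₀ ℕ) → ι → ι → ℝ) :=
  {S | IsPosSeq r S ∧ ∑ k, S 0 k k = 1}

/-- The positive semidefinite matrices of trace one. -/
def densityMatrices (ι : Type*) [Fintype ι] : Set (ι → ι → ℝ) :=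
  {A | (Matrix.of A).PosSemidef ∧ ∑ k, A k k = 1}

lemma convex_normalizedSeqs : Convex ℝ (normalizedSeqs σ ι r) := by
  rintro S ⟨hS, hS1⟩ T ⟨hT, hT1⟩ a b ha hb hab
  refine ⟨(hS.smul ha).add (hT.smul hb), ?_⟩
  simp only [Pi.add_apply, Pi.smul_apply, smul_eq_mul, sum_add_distrib, ← mul_sum, hS1, hT1,
    mul_one, hab]

lemma mem_normalizedSeqs_iff (hr : 0 < r) :
    S ∈ normalizedSeqs σ ι r ↔ (∀ α i j, S α i j = S α j i) ∧
      (∀ g : ι → MvPolynomial σ ℝ, 0 ≤ ∑ i, ∑ j, riesz S (g i * g j) i j) ∧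
      (∀ α i j, |S α i j| ≤ r ^ α.degree) ∧ ∑ k, S 0 k k = 1 := by
  constructor
  · rintro ⟨hS, h1⟩
    exact ⟨hS.symm, hS.nonneg, fun α i j => by simpa [h1] using hS.abs_apply_le hr α i j, h1⟩
  · rintro ⟨hsymm, hnonneg, hle, h1⟩
    have hO : S =O[⊤] fun α => r ^ α.degree := by
      refine Asymptotics.isBigO_pi.2 fun i => Asymptotics.isBigO_pi.2 fun j =>
        Asymptotics.isBigO_top.2 ⟨1, fun α => ?_⟩
      simpa [abs_of_pos hr] using hle α i j
    exact ⟨⟨hsymm, hnonneg, hO⟩, h1⟩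

lemma isClosed_normalizedSeqs (hr : 0 < r) : IsClosed (normalizedSeqs σ ι r) := by
  have hset : normalizedSeqs σ ι r = {S : (σ →₀ ℕ) → ι → ι → ℝ | (∀ α i j, S α i j = S α j i) ∧
      (∀ g : ι → MvPolynomial σ ℝ, 0 ≤ ∑ i, ∑ j, riesz S (g i * g j) i j) ∧
      (∀ α i j, |S α i j| ≤ r ^ α.degree) ∧ ∑ k, S 0 k k = 1} :=
    Set.ext fun S => mem_normalizedSeqs_iff hr
  simp only [hset, Set.ofPred_and, Set.ofPred_forall, riesz_apply]
  refine .inter ?_ (.inter ?_ (.inter ?_ (isClosed_eq (by fun_prop) continuous_const)))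
  · exact isClosed_iInter fun α => isClosed_iInter fun i => isClosed_iInter fun j =>
      isClosed_eq (by fun_prop) (by fun_prop)
  · exact isClosed_iInter fun g => isClosed_le continuous_const (by fun_prop)
  · exact isClosed_iInter fun α => isClosed_iInter fun i => isClosed_iInter fun j =>
      isClosed_le (by fun_prop) continuous_const

lemma isCompact_normalizedSeqs (hr : 0 < r) : IsCompact (normalizedSeqs σ ι r) := by
  have hK : IsCompact (Set.univ.pi fun α : σ →₀ ℕ => Set.univ.pi fun _ : ι =>
      Set.univ.pi fun _ : ι => Set.Icc (-r ^ α.degree) (r ^ α.degree)) :=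
    isCompact_univ_pi fun α => isCompact_univ_pi fun _ => isCompact_univ_pi fun _ => isCompact_Icc
  exact hK.of_isClosed_subset (isClosed_normalizedSeqs hr) fun S hS α _ i _ j _ =>
    abs_le.1 (((mem_normalizedSeqs_iff hr).1 hS).2.2.1 α i j)

lemma abs_apply_le_one_of_mem_densityMatrices {A : ι → ι → ℝ} (hA : A ∈ densityMatrices ι)
    (i j : ι) : |A i j| ≤ 1 := by
  obtain ⟨hsymm, hnonneg⟩ := posSemidef_iff_sum_nonneg.1 hA.1
  have h := abs_apply_le_of_quadForm_le (c := 1) (A := A) hsymm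
    (fun v => by rw [one_mul]; exact (abs_of_nonneg (hnonneg v)).le) i j
  rwa [hA.2, one_mul] at h

lemma isCompact_densityMatrices : IsCompact (densityMatrices ι) := by
  refine Metric.isCompact_of_isClosed_isBounded ?_ ?_
  · simp only [densityMatrices, posSemidef_iff_sum_nonneg, Matrix.of_apply, Set.ofPred_and,
      Set.ofPred_forall]
    refine .inter (.inter ?_ ?_) (isClosed_eq (by fun_prop) continuous_const)
    · exact isClosed_iInter fun i => isClosed_iInter fun j =>
        isClosed_eq (by fun_prop) (by fun_prop)
    · exact isClosed_iInter fun v => isClosed_le continuous_const (by fun_prop)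
  · refine (Metric.isBounded_closedBall (x := 0) (r := 1)).subset fun A hA => ?_
    rw [mem_closedBall_zero_iff, pi_norm_le_iff_of_nonneg zero_le_one]
    exact fun i => (pi_norm_le_iff_of_nonneg zero_le_one).2 fun j =>
      abs_apply_le_one_of_mem_densityMatrices hA i j

lemma IsPosSeq.normalize_mem (hS : IsPosSeq r S) (h : 0 < ∑ k, S 0 k k) :
    (∑ k, S 0 k k)⁻¹ • S ∈ normalizedSeqs σ ι r := by
  refine ⟨hS.smul (by positivity), ?_⟩
  simp only [Pi.smul_apply, smul_eq_mul, ← mul_sum]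
  exact inv_mul_cancel₀ h.ne'

lemma eq_trace_smul_of_add_eq_extremePoint (hr : 0 < r)
    (hS : S ∈ (normalizedSeqs σ ι r).extremePoints ℝ) (hP : IsPosSeq r P) (hM : IsPosSeq r M)
    (h : P + M = S) : P = (∑ k, P 0 k k) • S := by
  have htr : ∑ k, P 0 k k + ∑ k, M 0 k k = 1 := by
    rw [← hS.1.2, ← h, ← sum_add_distrib]
    rfl
  rcases hP.trace_nonneg.eq_or_lt with hP0 | hP0
  · rw [← hP0, zero_smul, hP.eq_zero_of_trace_eq_zero hr hP0.symm]
  rcases hM.trace_nonneg.eq_or_lt with hM0 | hM0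
  · rw [← hM0, add_zero] at htr
    rw [htr, one_smul, ← h, hM.eq_zero_of_trace_eq_zero hr hM0.symm, add_zero]
  have hseg : S ∈ openSegment ℝ ((∑ k, P 0 k k)⁻¹ • P) ((∑ k, M 0 k k)⁻¹ • M) :=
    ⟨_, _, hP0, hM0, htr, by rw [smul_inv_smul₀ hP0.ne', smul_inv_smul₀ hM0.ne', h]⟩
  rw [← hS.2 (hP.normalize_mem hP0) (hM.normalize_mem hM0) hseg, smul_inv_smul₀ hP0.ne']

lemma exists_shift_eq_smul (hr : 0 < r) (hS : S ∈ (normalizedSeqs σ ι r).extremePoints ℝ)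
    (l : σ) : ∃ c : ℝ, shift l S = c • S := by
  have hpos : ∀ c : ℝ, |c| * r ≤ 1 → IsPosSeq r ((1 / 2 : ℝ) • (S + c • shift l S)) :=
    fun c hc => (hS.1.1.add_smul_shift hr l hc).smul (by norm_num)
  have hr1 : |r⁻¹| * r ≤ 1 := by rw [abs_of_pos (inv_pos.2 hr), inv_mul_cancel₀ hr.ne']
  have heq := eq_trace_smul_of_add_eq_extremePoint hr hS (hpos r⁻¹ hr1)
    (hpos (-r⁻¹) (by rwa [abs_neg])) (by module)
  generalize ∑ k, ((1 / 2 : ℝ) • (S + r⁻¹ • shift l S)) 0 k k = t at heq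
  refine ⟨r * (2 * t - 1), ?_⟩
  calc shift l S = (2 * r) • ((1 / 2 : ℝ) • (S + r⁻¹ • shift l S)) - r • S := by
        match_scalars <;> field_simp
        ring
    _ = (r * (2 * t - 1)) • S := by rw [heq]; module

lemma exists_riesz_eq_eval_smul (hr : 0 < r) (hS : S ∈ (normalizedSeqs σ ι r).extremePoints ℝ) :
    ∃ u : σ → ℝ, ∀ f, riesz S f = eval u f • S 0 := by
  choose u hu using exists_shift_eq_smul hr hS
  refine ⟨u, fun f => ?_⟩
  induction f using MvPolynomial.induction_on with
  | C a => rw [C_apply, riesz_monomial, ← C_apply, eval_C]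
  | add f g hf hg => rw [map_add, map_add, hf, hg, add_smul]
  | mul_X f l hf =>
    rw [mul_comm, ← riesz_shift, hu, map_smul, LinearMap.smul_apply, hf, map_mul, eval_X, mul_smul]

lemma exists_point_of_mem_extremePoints (hr : 0 < r)
    (hS : S ∈ (normalizedSeqs σ ι r).extremePoints ℝ) :
    ∃ u : σ → ℝ, (∀ l, |u l| ≤ r) ∧ S 0 ∈ densityMatrices ι ∧
      ∀ α, S α = eval u (monomial α 1) • S 0 := by
  obtain ⟨u, hu⟩ := exists_riesz_eq_eval_smul hr hS
  have hSu (α : σ →₀ ℕ) : S α = eval u (monomial α 1) • S 0 := by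
    rw [← hu, riesz_monomial, one_smul]
  refine ⟨u, fun l => ?_, ⟨hS.1.1.posSemidef_zero, hS.1.2⟩, hSu⟩
  have hdiag := abs_diag_le_of_quadForm_le (hS.1.1.abs_quadForm_le hr (Finsupp.single l 1))
  calc |u l| = |∑ k, S (Finsupp.single l 1) k k| := by
        have hX : eval u (monomial (Finsupp.single l 1) 1) = u l := eval_X l
        simp only [hSu (Finsupp.single l 1), hX, Pi.smul_apply, smul_eq_mul, ← mul_sum, hS.1.2,
          mul_one]
    _ ≤ ∑ k, |S (Finsupp.single l 1) k k| := abs_sum_le_sum_abs _ _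
    _ ≤ ∑ k, r * S 0 k k :=
        sum_le_sum fun k _ => by simpa only [Finsupp.degree_single, pow_one] using hdiag k
    _ = r := by rw [← mul_sum, hS.1.2, mul_one]

end Extreme

/-! ### Measures on the box with matrix density -/

section ExistsMeasure

variable {σ ι : Type*} [Fintype σ] [Fintype ι] {r : ℝ}
  {S : (σ →₀ ℕ) → ι → ι → ℝ}

/-- The pairs of a point of the box `[-r, r]^σ` and a positive semidefinite matrix of trace one. -/
def boxStates (σ ι : Type*) [Fintype σ] [Fintype ι] (r : ℝ) : Set ((σ → ℝ) × (ι → ι → ℝ)) :=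
  Metric.closedBall 0 r ×ˢ densityMatrices ι

lemma isCompact_boxStates : IsCompact (boxStates σ ι r) :=
  (isCompact_closedBall 0 r).prod isCompact_densityMatrices

lemma exists_probabilityMeasure_of_mem_normalizedSeqs (hr : 0 < r)
    (hS : S ∈ normalizedSeqs σ ι r) :
    ∃ μ : ProbabilityMeasure (boxStates σ ι r),
      ∀ α i j, ∫ e : boxStates σ ι r,
        eval e.1.1 (monomial α 1) * e.1.2 i j ∂μ = S α i j := by
  have : CompactSpace (boxStates σ ι r) :=
    isCompact_iff_compactSpace.1 isCompact_boxStates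
  let F (e : boxStates σ ι r) (α : σ →₀ ℕ) : ι → ι → ℝ :=
    eval e.1.1 (monomial α 1) • e.1.2
  have hF : Continuous F := continuous_pi fun α =>
    ((MvPolynomial.continuous_eval _).comp (continuous_fst.comp continuous_subtype_val)).smul
      (continuous_snd.comp continuous_subtype_val)
  have hext : (normalizedSeqs σ ι r).extremePoints ℝ ⊆ Set.range F := by
    intro T hT
    obtain ⟨u, hu, hT0, hTu⟩ := exists_point_of_mem_extremePoints hr hT
    have hmem : u ∈ Metric.closedBall (0 : σ → ℝ) r :=
      mem_closedBall_zero_iff.2 ((pi_norm_le_iff_of_nonneg hr.le).2 hu)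
    exact ⟨⟨(u, T 0), hmem, hT0⟩, funext fun α => (hTu α).symm⟩
  obtain ⟨μ, hμ⟩ := exists_integral_eq_of_extremePoints_subset_range
    (isCompact_normalizedSeqs hr) convex_normalizedSeqs hF hext hS
  refine ⟨μ, fun α i j => ?_⟩
  let entry : ((σ →₀ ℕ) → ι → ι → ℝ) →L[ℝ] ℝ :=
    .comp (.proj (R := ℝ) (φ := fun _ : ι => ℝ) j) (.comp (.proj i) (.proj α))
  exact hμ entry

theorem IsPosSeq.exists_measure (hS : IsPosSeq r S) (hr : 0 < r) :
    ∃ μ : Measure ((σ → ℝ) × (ι → ι → ℝ)), IsFiniteMeasure μ ∧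
      (∀ᵐ e ∂μ, e ∈ boxStates σ ι r) ∧
      ∀ α i j, S α i j = ∫ e, eval e.1 (monomial α 1) * e.2 i j ∂μ := by
  rcases hS.trace_nonneg.eq_or_lt with h0 | h0
  · exact ⟨0, inferInstance, by simp, by simp [hS.eq_zero_of_trace_eq_zero hr h0.symm]⟩
  obtain ⟨μ, hμ⟩ := exists_probabilityMeasure_of_mem_normalizedSeqs hr (hS.normalize_mem h0)
  have hmeas : MeasurableSet (boxStates σ ι r) := isCompact_boxStates.isClosed.measurableSet
  refine ⟨ENNReal.ofReal (∑ k, S 0 k k) • (μ : Measure (boxStates σ ι r)).map Subtype.val,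
    Measure.smul_finite _ ENNReal.ofReal_ne_top, Measure.ae_smul_measure ?_ _, fun α i j => ?_⟩
  · exact (ae_map_iff measurable_subtype_coe.aemeasurable hmeas).2 (.of_forall Subtype.property)
  · rw [integral_smul_measure, (MeasurableEmbedding.subtype_coe hmeas).integral_map, hμ,
      ENNReal.toReal_ofReal h0.le]
    simp only [Pi.smul_apply, smul_eq_mul]
    rw [mul_inv_cancel_left₀ h0.ne']

end ExistsMeasure

/-! ### Moment sequences of measures with matrix density -/

section TracePairing

variable {ι κ σ : Type*}

lemma sum_mul_nonneg_of_posSemidef [Fintype ι] {A B : Matrix ι ι ℝ} (hA : A.PosSemidef)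
    (hB : B.PosSemidef) :
    0 ≤ ∑ i, ∑ j, A i j * B i j := by
  simpa [dotProduct, Matrix.mulVec, hadamard_apply] using
    (hA.hadamard hB).dotProduct_mulVec_nonneg 1

lemma posSemidef_evalMat_conj [Finite ι] [Fintype κ] {G : Matrix κ κ (MvPolynomial σ ℝ)} {x : σ → ℝ}
    (hG : (evalMat x G).PosSemidef) (P : Matrix ι κ (MvPolynomial σ ℝ)) :
    (evalMat x (P * G * Pᵀ)).PosSemidef := by
  have h := hG.mul_mul_conjTranspose_same (P.map (eval x))
  rwa [conjTranspose_eq_transpose_of_trivial, ← transpose_map, evalMat, ← Matrix.map_mul,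
    ← Matrix.map_mul] at h

lemma posSemidef_evalMat_vecMulVec [Finite ι] (x : σ → ℝ) (g : ι → MvPolynomial σ ℝ) :
    (evalMat x (vecMulVec g g)).PosSemidef := by
  have h : evalMat x (vecMulVec g g) =
      vecMulVec (fun i => eval x (g i)) (star fun i => eval x (g i)) := by
    ext i j
    exact map_mul (eval x) (g i) (g j)
  exact h ▸ posSemidef_vecMulVec_self_star _

end TracePairing

section RepresentsMoments

variable {Ω σ ι : Type*} [MeasurableSpace Ω] {μ : Measure Ω} {ξ : Ω → σ → ℝ}
  {D : Ω → ι → ι → ℝ} {S : (σ →₀ ℕ) → ι → ι → ℝ}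

/-- `S` is the sequence of matrix moments `∫ ξ^α D dμ` of the image under `ξ` of the measure with
positive semidefinite matrix density `D` with respect to `μ`. -/
structure RepresentsMoments (μ : Measure Ω) (ξ : Ω → σ → ℝ) (D : Ω → ι → ι → ℝ)
    (S : (σ →₀ ℕ) → ι → ι → ℝ) : Prop where
  ae_posSemidef : ∀ᵐ ω ∂μ, (Matrix.of (D ω)).PosSemidef
  integrable : ∀ f i j, Integrable (fun ω => eval (ξ ω) f * D ω i j) μ
  riesz_eq : ∀ f i j, riesz S f i j = ∫ ω, eval (ξ ω) f * D ω i j ∂μ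

lemma RepresentsMoments.of_monomial (hD : ∀ᵐ ω ∂μ, (Matrix.of (D ω)).PosSemidef)
    (hint : ∀ α i j, Integrable (fun ω => eval (ξ ω) (monomial α 1) * D ω i j) μ)
    (hS : ∀ α i j, S α i j = ∫ ω, eval (ξ ω) (monomial α 1) * D ω i j ∂μ) :
    RepresentsMoments μ ξ D S := by
  have hsmul (α : σ →₀ ℕ) (c : ℝ) (ω : Ω) (i j : ι) :
      eval (ξ ω) (monomial α c) * D ω i j = c * (eval (ξ ω) (monomial α 1) * D ω i j) := by
    rw [← mul_assoc, ← smul_eval, smul_monomial, smul_eq_mul, mul_one]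
  have hint' (f : MvPolynomial σ ℝ) (i j : ι) :
      Integrable (fun ω => eval (ξ ω) f * D ω i j) μ := by
    induction f using MvPolynomial.induction_on' with
    | monomial α c =>
      exact ((hint α i j).const_mul c).congr (.of_forall fun ω => (hsmul α c ω i j).symm)
    | add f g hf hg => simpa only [map_add, add_mul] using hf.fun_add hg
  refine ⟨hD, hint', fun f i j => ?_⟩
  induction f using MvPolynomial.induction_on' with
  | monomial α c =>
    rw [riesz_monomial, integral_congr_ae (.of_forall fun ω => hsmul α c ω i j),
      integral_const_mul, ← hS]
    rfl
  | add f g hf hg =>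
    simp only [map_add, add_mul]
    rw [integral_add (hint' f i j) (hint' g i j), ← hf, ← hg]
    rfl

namespace RepresentsMoments

lemma apply_eq (h : RepresentsMoments μ ξ D S) (α : σ →₀ ℕ) (i j : ι) :
    S α i j = ∫ ω, eval (ξ ω) (monomial α 1) * D ω i j ∂μ := by
  rw [← h.riesz_eq, riesz_monomial, one_smul]

variable [Fintype ι]

lemma sum_riesz_eq (h : RepresentsMoments μ ξ D S) (F : Matrix ι ι (MvPolynomial σ ℝ)) :
    ∑ i, ∑ j, riesz S (F i j) i j = ∫ ω, ∑ i, ∑ j, eval (ξ ω) (F i j) * D ω i j ∂μ := by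
  calc ∑ i, ∑ j, riesz S (F i j) i j
      = ∑ i, ∑ j, ∫ ω, eval (ξ ω) (F i j) * D ω i j ∂μ := by simp only [h.riesz_eq]
    _ = ∑ i, ∫ ω, ∑ j, eval (ξ ω) (F i j) * D ω i j ∂μ :=
        sum_congr rfl fun i _ => (integral_finsetSum _ fun j _ => h.integrable _ i j).symm
    _ = ∫ ω, ∑ i, ∑ j, eval (ξ ω) (F i j) * D ω i j ∂μ :=
        (integral_finsetSum _ fun i _ => integrable_finsetSum _ fun j _ =>
          h.integrable _ i j).symm

lemma sum_riesz_nonneg (h : RepresentsMoments μ ξ D S) {F : Matrix ι ι (MvPolynomial σ ℝ)}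
    (hF : ∀ᵐ ω ∂μ, (evalMat (ξ ω) F).PosSemidef) : 0 ≤ ∑ i, ∑ j, riesz S (F i j) i j := by
  rw [h.sum_riesz_eq]
  refine integral_nonneg_of_ae ?_
  filter_upwards [hF, h.ae_posSemidef] with ω hFω hDω
  exact sum_mul_nonneg_of_posSemidef hFω hDω

end RepresentsMoments

end RepresentsMoments

section ProdMoments

variable {n m : ℕ} {ι : Type*} {ν : Measure (Fin m → ℝ)}

/-- The moments `∫ y^β dν · S_α` in the variables `(x, y)`, where `S_α` stands for a measure in the
variable `x`. -/
def prodMoments (ν : Measure (Fin m → ℝ)) (S : (Fin n →₀ ℕ) → ι → ι → ℝ)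
    (e : (Fin n ⊕ Fin m) →₀ ℕ) : ι → ι → ℝ :=
  (∫ y, ∏ j, y j ^ e (Sum.inr j) ∂ν) • S (xPart e)

lemma eval_sumElim_monomial (x : Fin n → ℝ) (y : Fin m → ℝ) (e : (Fin n ⊕ Fin m) →₀ ℕ) :
    eval (Sum.elim x y) (monomial e 1) =
      eval x (monomial (xPart e) 1) * ∏ j, y j ^ e (Sum.inr j) := by
  simp only [eval_monomial, Finsupp.prod_fintype _ _ fun _ => pow_zero _, Fintype.prod_sum_type,
    Sum.elim_inl, Sum.elim_inr, one_mul, xPart, Finsupp.comapDomain_apply]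

lemma momentsFinite.integrable_prod_pow (hmom : momentsFinite ν) (β : Fin m → ℕ) :
    Integrable (fun y => ∏ j, y j ^ β j) ν := by
  simpa using hmom.integrable (∏ j, X j ^ β j)

lemma RepresentsMoments.prod {Ω : Type*} [MeasurableSpace Ω] {μ : Measure Ω} [SFinite μ]
    {ξ : Ω → Fin n → ℝ} {D : Ω → ι → ι → ℝ} {S : (Fin n →₀ ℕ) → ι → ι → ℝ}
    (h : RepresentsMoments μ ξ D S) (hmom : momentsFinite ν) :
    RepresentsMoments (μ.prod ν) (fun z => Sum.elim (ξ z.1) z.2) (fun z => D z.1)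
      (prodMoments ν S) := by
  have := hmom.isFiniteMeasure
  have hsplit (e : (Fin n ⊕ Fin m) →₀ ℕ) (i j : ι) (z : Ω × (Fin m → ℝ)) :
      eval (Sum.elim (ξ z.1) z.2) (monomial e 1) * D z.1 i j =
        eval (ξ z.1) (monomial (xPart e) 1) * D z.1 i j * ∏ l, z.2 l ^ e (Sum.inr l) := by
    rw [eval_sumElim_monomial, mul_right_comm]
  refine .of_monomial (Measure.quasiMeasurePreserving_fst.ae h.ae_posSemidef) (fun e i j => ?_)
    fun e i j => ?_
  · simp only [hsplit]
    exact (h.integrable _ i j).mul_prod (hmom.integrable_prod_pow _)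
  · simp only [hsplit]
    refine Eq.symm ((integral_prod_mul (fun ω => eval (ξ ω) (monomial (xPart e) 1) * D ω i j)
      fun y : Fin m → ℝ => ∏ l, y l ^ e (Sum.inr l)).trans ?_)
    rw [← h.apply_eq, mul_comm]
    rfl

end ProdMoments

/-! ### Moment and localizing matrices -/

section MomentMatrix

variable {n p : ℕ} {S : (Fin n →₀ ℕ) → Matrix (Fin p) (Fin p) ℝ}

lemma sum_momentMatrix_eq (S : (Fin n →₀ ℕ) → Matrix (Fin p) (Fin p) ℝ) {N : ℕ}
    (idx : Fin N → (Fin n →₀ ℕ)) (c : Fin N × Fin p → ℝ) :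
    ∑ a, ∑ b, c a * c b * S (idx a.1 + idx b.1) a.2 b.2 =
      ∑ i, ∑ j, riesz (fun α i j => S α i j)
        ((∑ a, monomial (idx a) (c (a, i))) * ∑ b, monomial (idx b) (c (b, j))) i j := by
  simp only [sum_mul_sum, map_sum, monomial_mul, riesz_monomial, Fintype.sum_prod_type_right,
    Finset.sum_apply, Pi.smul_apply, smul_eq_mul]
  exact sum_congr rfl fun i _ => sum_comm

lemma exists_eq_sum_monomial {ι σ : Type*} [Finite ι] (g : ι → MvPolynomial σ ℝ) :
    ∃ (N : ℕ) (idx : Fin N → (σ →₀ ℕ)),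
      ∀ i, ∑ a, monomial (idx a) (coeff (idx a) (g i)) = g i := by
  classical
  cases nonempty_fintype ι
  set s : Finset (σ →₀ ℕ) := univ.biUnion fun i => (g i).support
  refine ⟨s.card, fun a => s.equivFin.symm a, fun i => ?_⟩
  rw [Equiv.sum_comp s.equivFin.symm fun α : s =>
    monomial (α : σ →₀ ℕ) (coeff (α : σ →₀ ℕ) (g i)),
    sum_coe_sort s fun α => monomial α (coeff α (g i))]
  conv_rhs => rw [as_sum (g i)]
  refine (sum_subset (subset_biUnion_of_mem (fun i => (g i).support) (mem_univ i))
    fun α _ hα => ?_).symm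
  rw [notMem_support_iff.1 hα, map_zero]

lemma MomentPSD.sum_riesz_nonneg (hS : MomentPSD S) (g : Fin p → MvPolynomial (Fin n) ℝ) :
    0 ≤ ∑ i, ∑ j, riesz (fun α i j => S α i j) (g i * g j) i j := by
  obtain ⟨N, idx, hg⟩ := exists_eq_sum_monomial g
  have h := (posSemidef_iff_sum_nonneg.1 (hS N idx)).2 fun a => coeff (idx a.1) (g a.2)
  simp only [Matrix.of_apply] at h
  rw [sum_momentMatrix_eq S idx fun a => coeff (idx a.1) (g a.2)] at h
  simpa only [hg] using h

lemma RepresentsMoments.momentPSD {Ω : Type*} [MeasurableSpace Ω] {μ : Measure Ω}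
    {ξ : Ω → Fin n → ℝ} {D : Ω → Fin p → Fin p → ℝ}
    (h : RepresentsMoments μ ξ D fun α i j => S α i j) (hsym : ∀ α, (S α).IsSymm) :
    MomentPSD S := by
  refine fun N idx => posSemidef_iff_sum_nonneg.2 ⟨fun a b => ?_, fun c => ?_⟩
  · rw [Matrix.of_apply, Matrix.of_apply, add_comm]
    exact (hsym _).apply b.2 a.2
  · simp only [Matrix.of_apply]
    rw [sum_momentMatrix_eq]
    exact h.sum_riesz_nonneg (.of_forall fun ω => posSemidef_evalMat_vecMulVec _ _)

end MomentMatrix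

section LocalizingMatrix

variable {n m p q d k : ℕ} {ν : Measure (Fin m → ℝ)}
  {G : Matrix (Fin q) (Fin q) (MvPolynomial (Fin n ⊕ Fin m) ℝ)}
  {S : (Fin n →₀ ℕ) → Matrix (Fin p) (Fin p) ℝ}

/-- The exponent in the variables `(x, y)` with the given `x`- and `y`-parts. -/
def joinExpo (a : Expo n d × Expo m k) : (Fin n ⊕ Fin m) →₀ ℕ :=
  Finsupp.equivFunOnFinite.symm (Sum.elim (fun i => (a.1.1 i : ℕ)) fun j => (a.2.1 j : ℕ))

lemma joinExpo_injective :
    Function.Injective (joinExpo : Expo n d × Expo m k → (Fin n ⊕ Fin m) →₀ ℕ) := by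
  intro a b hab
  have h := Finsupp.equivFunOnFinite.symm.injective hab
  exact Prod.ext (Subtype.ext (funext fun i => Fin.ext (congrFun h (Sum.inl i))))
    (Subtype.ext (funext fun j => Fin.ext (congrFun h (Sum.inr j))))

lemma exists_joinExpo_eq {N : ℕ} {e : (Fin n ⊕ Fin m) →₀ ℕ} (he : e.degree ≤ N) :
    ∃ a : Expo n N × Expo m N, joinExpo a = e := by
  have hsum : ∑ i, e (Sum.inl i) + ∑ j, e (Sum.inr j) ≤ N := by
    rwa [Finsupp.degree_eq_sum, Fintype.sum_sum_type] at he
  have hlt (i : Fin n ⊕ Fin m) : e i < N + 1 :=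
    ((Finsupp.le_degree i e).trans he).trans_lt N.lt_succ_self
  refine ⟨(⟨fun i => ⟨e (Sum.inl i), hlt _⟩, (Nat.le_add_right _ _).trans hsum⟩,
    ⟨fun j => ⟨e (Sum.inr j), hlt _⟩, (Nat.le_add_left _ _).trans hsum⟩), ?_⟩
  ext (i | j) <;> rfl

/-- The polynomial matrix with coefficient vector `v`. -/
def polyMatrix (v : (Expo n d × Expo m k) × (Fin p × Fin q) → ℝ) :
    Matrix (Fin p) (Fin q) (MvPolynomial (Fin n ⊕ Fin m) ℝ) :=
  Matrix.of fun i l => ∑ a, monomial (joinExpo a) (v (a, (i, l)))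

lemma exists_polyMatrix_eq (P : Matrix (Fin p) (Fin q) (MvPolynomial (Fin n ⊕ Fin m) ℝ)) :
    ∃ (N : ℕ) (v : (Expo n N × Expo m N) × (Fin p × Fin q) → ℝ), polyMatrix v = P := by
  classical
  refine ⟨univ.sup fun il : Fin p × Fin q => (P il.1 il.2).totalDegree,
    fun a => coeff (joinExpo a.1) (P a.2.1 a.2.2), ?_⟩
  ext1 i l
  rw [polyMatrix, Matrix.of_apply, ← sum_image (s := univ) (g := joinExpo)
    (f := fun e => monomial e (coeff e (P i l))) joinExpo_injective.injOn]
  conv_rhs => rw [as_sum (P i l)]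
  refine (sum_subset (fun e he => ?_) fun e _ he => ?_).symm
  · obtain ⟨a, ha⟩ := exists_joinExpo_eq ((le_totalDegree he).trans
      (le_sup (f := fun il : Fin p × Fin q => (P il.1 il.2).totalDegree) (mem_univ (i, l))))
    exact mem_image.2 ⟨a, mem_univ a, ha⟩
  · rw [notMem_support_iff.1 he, map_zero]

lemma mul_locMat_eq_riesz (r c : (Expo n d × Expo m k) × (Fin p × Fin q)) (s t : ℝ) :
    s * t * locMat ν G S d k r c = riesz (prodMoments ν fun α i j => S α i j)
      (monomial (joinExpo r.1) s * G r.2.2 c.2.2 * monomial (joinExpo c.1) t) r.2.1 c.2.1 := by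
  conv_rhs => rw [as_sum (G r.2.2 c.2.2)]
  simp only [Finset.mul_sum, Finset.sum_mul, map_sum, monomial_mul, riesz_monomial,
    Finset.sum_apply, Pi.smul_apply, smul_eq_mul, locMat, Matrix.of_apply]
  refine sum_congr rfl fun e _ => ?_
  have hx : xPart (joinExpo r.1 + e + joinExpo c.1) =
      expF r.1.1.1 + expF c.1.1.1 + xPart e := by
    ext i
    exact add_right_comm _ _ _
  have hy (j : Fin m) : (joinExpo r.1 + e + joinExpo c.1) (Sum.inr j) =
      e (Sum.inr j) + (r.1.2.1 j : ℕ) + (c.1.2.1 j : ℕ) :=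
    congrArg (· + (c.1.2.1 j : ℕ)) (add_comm _ _)
  simp only [prodMoments, hx, hy, Pi.smul_apply, smul_eq_mul]
  ring

lemma sum_prod_prod_comm {A B K : Type*} [Fintype A] [Fintype B] [Fintype K]
    (F : A × (B × K) → A × (B × K) → ℝ) :
    ∑ r, ∑ c, F r c = ∑ i, ∑ j, ∑ l', ∑ l, ∑ a, ∑ b, F (a, (i, l)) (b, (j, l')) := by
  rw [Fintype.sum_prod_type_right, Fintype.sum_prod_type]
  refine sum_congr rfl fun i _ => ?_
  calc ∑ l, ∑ a, ∑ c, F (a, (i, l)) c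
      = ∑ l, ∑ a, ∑ j, ∑ l', ∑ b, F (a, (i, l)) (b, (j, l')) := by
        simp only [Fintype.sum_prod_type_right (α₂ := B × K), Fintype.sum_prod_type (α₁ := B)]
    _ = ∑ l, ∑ j, ∑ l', ∑ a, ∑ b, F (a, (i, l)) (b, (j, l')) :=
        sum_congr rfl fun l _ => sum_comm.trans (sum_congr rfl fun j _ => sum_comm)
    _ = ∑ j, ∑ l', ∑ l, ∑ a, ∑ b, F (a, (i, l)) (b, (j, l')) :=
        sum_comm.trans (sum_congr rfl fun j _ => sum_comm)

lemma sum_locMat_eq (v : (Expo n d × Expo m k) × (Fin p × Fin q) → ℝ) :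
    ∑ r, ∑ c, v r * v c * locMat ν G S d k r c =
      ∑ i, ∑ j, riesz (prodMoments ν fun α i j => S α i j)
        ((polyMatrix v * G * (polyMatrix v)ᵀ) i j) i j := by
  simp only [mul_locMat_eq_riesz, sum_prod_prod_comm, Matrix.mul_apply, Matrix.transpose_apply,
    polyMatrix, Matrix.of_apply, Finset.sum_mul, Finset.mul_sum, map_sum, Finset.sum_apply]
  refine sum_congr rfl fun i _ => sum_congr rfl fun j _ => sum_congr rfl fun l' _ =>
    (sum_congr rfl fun l _ => sum_comm).trans sum_comm

lemma riesz_apply_comm {σ ι : Type*} {T : (σ →₀ ℕ) → ι → ι → ℝ} (hT : ∀ α i j, T α i j = T α j i)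
    (f : MvPolynomial σ ℝ) (i j : ι) : riesz T f i j = riesz T f j i := by
  simp only [riesz_apply, Finset.sum_apply, Pi.smul_apply, hT _ i j]

lemma locMat_apply_comm (hG : G.IsSymm) (hS : ∀ α, (S α).IsSymm)
    (r c : (Expo n d × Expo m k) × (Fin p × Fin q)) :
    locMat ν G S d k r c = locMat ν G S d k c r := by
  have hT (e : (Fin n ⊕ Fin m) →₀ ℕ) (i j : Fin p) :
      prodMoments ν (fun α i j => S α i j) e i j = prodMoments ν (fun α i j => S α i j) e j i := by
    simp only [prodMoments, Pi.smul_apply, (hS _).apply i j]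
  have h (r c) := mul_locMat_eq_riesz (ν := ν) (G := G) (S := S) (d := d) (k := k) r c 1 1
  simp only [mul_one, one_mul] at h
  rw [h, h, riesz_apply_comm hT, hG.apply, mul_right_comm, mul_comm (monomial _ _), mul_right_comm,
    mul_comm _ (monomial _ _)]

lemma sum_riesz_conj_nonneg_of_locMat (h : ∀ d k : ℕ, (locMat ν G S d k).PosSemidef)
    (P : Matrix (Fin p) (Fin q) (MvPolynomial (Fin n ⊕ Fin m) ℝ)) :
    0 ≤ ∑ i, ∑ j, riesz (prodMoments ν fun α i j => S α i j) ((P * G * Pᵀ) i j) i j := by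
  obtain ⟨N, v, rfl⟩ := exists_polyMatrix_eq P
  rw [← sum_locMat_eq]
  exact (posSemidef_iff_sum_nonneg.1 (h N N)).2 v

lemma RepresentsMoments.posSemidef_locMat {Ω : Type*} [MeasurableSpace Ω] {μ : Measure Ω}
    [SFinite μ] {ξ : Ω → Fin n → ℝ} {D : Ω → Fin p → Fin p → ℝ}
    (h : RepresentsMoments μ ξ D fun α i j => S α i j) (hS : ∀ α, (S α).IsSymm)
    (hG : G.IsSymm) (hmom : momentsFinite ν)
    {Y : Set (Fin m → ℝ)} (hY : ∀ᵐ y ∂ν, y ∈ Y)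
    (hpos : ∀ᵐ ω ∂μ, ∀ y ∈ Y, (evalMat (Sum.elim (ξ ω) y) G).PosSemidef) (d k : ℕ) :
    (locMat ν G S d k).PosSemidef := by
  have := hmom.isFiniteMeasure
  refine posSemidef_iff_sum_nonneg.2 ⟨locMat_apply_comm hG hS, fun v => ?_⟩
  rw [sum_locMat_eq]
  refine (h.prod hmom).sum_riesz_nonneg ?_
  filter_upwards [Measure.quasiMeasurePreserving_fst.ae hpos,
    Measure.quasiMeasurePreserving_snd.ae hY] with z hz hzY
  exact posSemidef_evalMat_conj (hz z.2 hzY) _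

end LocalizingMatrix

/-! ### Exponential bounds -/

section SpecNorm

variable {ι : Type*} [Fintype ι] [DecidableEq ι]

lemma abs_apply_le_specNorm (A : Matrix ι ι ℝ) (i j : ι) : |A i j| ≤ specNorm A := by
  have h := (Matrix.toEuclideanLin A).toContinuousLinearMap.le_opNorm (EuclideanSpace.single j 1)
  rw [PiLp.norm_single, norm_one, mul_one] at h
  refine (le_of_eq ?_).trans ((PiLp.norm_apply_le _ i).trans h)
  simp [Matrix.toLpLin_apply, Matrix.mulVec_single]

lemma specNorm_le_sum_abs (A : Matrix ι ι ℝ) : specNorm A ≤ ∑ i, ∑ j, |A i j| := by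
  refine ContinuousLinearMap.opNorm_le_bound _
    (sum_nonneg fun i _ => sum_nonneg fun j _ => abs_nonneg _) fun x => ?_
  have hsum : (Matrix.toEuclideanLin A).toContinuousLinearMap x =
      ∑ i, EuclideanSpace.single i ((A *ᵥ x) i) := by
    ext k
    simp [Matrix.toLpLin_apply, Finset.sum_apply, Pi.single_apply]
  rw [hsum, Finset.sum_mul]
  refine (norm_sum_le _ _).trans (sum_le_sum fun i _ => ?_)
  rw [PiLp.norm_single, Matrix.mulVec, dotProduct, Finset.sum_mul]
  refine (norm_sum_le _ _).trans (sum_le_sum fun j _ => ?_)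
  rw [norm_mul, Real.norm_eq_abs]
  exact mul_le_mul_of_nonneg_left (PiLp.norm_apply_le _ j) (abs_nonneg _)

end SpecNorm

section ExponentialBound

variable {n p : ℕ} {r : ℝ} {S : (Fin n →₀ ℕ) → Matrix (Fin p) (Fin p) ℝ}

lemma MomentPSD.isPosSeq (hM : MomentPSD S) (hS : ∀ α, (S α).IsSymm) {c : ℝ}
    (hb : ∀ α : Fin n →₀ ℕ, specNorm (S α) ≤ c * r ^ ∑ i, α i) :
    IsPosSeq r fun α i j => S α i j where
  symm α i j := (hS α).apply j i
  nonneg := hM.sum_riesz_nonneg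
  isBigO := Asymptotics.isBigO_pi.2 fun i => Asymptotics.isBigO_pi.2 fun j =>
    .of_bound |c| <| .of_forall fun α => by
      rw [Real.norm_eq_abs, Real.norm_eq_abs, ← abs_mul, Finsupp.degree_eq_sum]
      exact (abs_apply_le_specNorm _ i j).trans ((hb α).trans (le_abs_self _))

lemma eval_monomial_one {σ : Type*} [Fintype σ] (x : σ → ℝ) (α : σ →₀ ℕ) :
    eval x (monomial α 1) = ∏ l, x l ^ α l := by
  rw [eval_monomial, one_mul, Finsupp.prod_fintype _ _ fun _ => pow_zero _]

lemma abs_eval_monomial_le {σ : Type*} [Finite σ] {x : σ → ℝ} (hx : ∀ i, |x i| ≤ r)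
    (α : σ →₀ ℕ) : |eval x (monomial α 1)| ≤ r ^ α.degree := by
  cases nonempty_fintype σ
  rw [eval_monomial_one, abs_prod, Finsupp.degree_eq_sum, ← prod_pow_eq_pow_sum]
  exact prod_le_prod (fun _ _ => abs_nonneg _) fun i _ => by
    rw [abs_pow]
    exact pow_le_pow_left₀ (abs_nonneg _) (hx i) _

lemma RepresentsMoments.exists_specNorm_le {Ω : Type*} [MeasurableSpace Ω] {μ : Measure Ω}
    {ξ : Ω → Fin n → ℝ} {D : Ω → Fin p → Fin p → ℝ}
    (h : RepresentsMoments μ ξ D fun α i j => S α i j) (hr : 0 ≤ r)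
    (hξ : ∀ᵐ ω ∂μ, ∀ i, |ξ ω i| ≤ r) :
    ∃ c > 0, ∀ α : Fin n →₀ ℕ, specNorm (S α) ≤ c * r ^ ∑ i, α i := by
  have hint (i j : Fin p) : Integrable (fun ω => |D ω i j|) μ := by
    simpa using (h.integrable 1 i j).abs
  have hentry (α : Fin n →₀ ℕ) (i j : Fin p) :
      |S α i j| ≤ r ^ α.degree * ∫ ω, |D ω i j| ∂μ := by
    rw [h.apply_eq, ← integral_const_mul, ← Real.norm_eq_abs]
    refine norm_integral_le_of_norm_le ((hint i j).const_mul _) ?_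
    filter_upwards [hξ] with ω hω
    rw [Real.norm_eq_abs, abs_mul]
    exact mul_le_mul_of_nonneg_right (abs_eval_monomial_le hω α) (abs_nonneg _)
  refine ⟨∑ i, ∑ j, ∫ ω, |D ω i j| ∂μ + 1, by positivity, fun α => ?_⟩
  calc specNorm (S α) ≤ ∑ i, ∑ j, |S α i j| := specNorm_le_sum_abs _
    _ ≤ ∑ i, ∑ j, r ^ α.degree * ∫ ω, |D ω i j| ∂μ :=
        sum_le_sum fun i _ => sum_le_sum fun j _ => hentry α i j
    _ = (∑ i, ∑ j, ∫ ω, |D ω i j| ∂μ) * r ^ ∑ i, α i := by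
        simp only [← mul_sum]
        rw [Finsupp.degree_eq_sum, mul_comm]
    _ ≤ (∑ i, ∑ j, ∫ ω, |D ω i j| ∂μ + 1) * r ^ ∑ i, α i := by
        gcongr
        exact le_add_of_nonneg_right zero_le_one

end ExponentialBound

/-! ### Localization on the support of the measure -/

section Support

lemma eval_nonneg_of_mem_support {σ : Type*} [Finite σ] {τ : Measure (σ → ℝ)}
    [IsFiniteMeasure τ] {K : Set (σ → ℝ)} (hK : IsCompact K) (hτ : ∀ᵐ x ∂τ, x ∈ K)
    {J : MvPolynomial σ ℝ} (hJ : ∀ h : MvPolynomial σ ℝ, 0 ≤ ∫ x, eval x (h ^ 2 * J) ∂τ)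
    {a : σ → ℝ} (ha : a ∈ τ.support) : 0 ≤ eval a J := by
  cases nonempty_fintype σ
  have haK : a ∈ K := Measure.support_subset_of_isClosed hK.isClosed hτ ha
  obtain ⟨B, hB⟩ := hK.exists_bound_of_continuousOn (f := fun x => ∑ l, (x l - a l) ^ 2)
    (by fun_prop)
  replace hB x (hx : x ∈ K) : ∑ l, (x l - a l) ^ 2 ≤ B := (le_abs_self _).trans (hB x hx)
  have hB0 : 0 ≤ B := by simpa using hB a haK
  let g : MvPolynomial σ ℝ := C (B + 1) - ∑ l, (X l - C (a l)) ^ 2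
  have hg x : eval x g = B + 1 - ∑ l, (x l - a l) ^ 2 := by simp [g]
  have hga : eval a g = B + 1 := by simp [hg]
  have hg0 x (hx : x ∈ K) : 0 ≤ eval x g := by
    rw [hg]
    linarith [hB x hx]
  have hlt x (_ : x ∈ K) (hxa : x ≠ a) : eval x g < eval a g := by
    obtain ⟨l, hl⟩ := Function.ne_iff.1 hxa
    have := sum_pos' (s := univ) (f := fun l => (x l - a l) ^ 2) (fun _ _ => sq_nonneg _)
      ⟨l, mem_univ l, sq_pos_of_ne_zero (sub_ne_zero.2 hl)⟩
    rw [hg, hga]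
    linarith
  have hJint : IntegrableOn (fun x => eval x J) K τ :=
    (continuous_eval J).continuousOn.integrableOn_compact hK
  have hKτ : τ.restrict K = τ := Measure.restrict_eq_self_of_ae_mem hτ
  have hlim := tendsto_setIntegral_pow_smul_of_unique_maximum_of_isCompact_of_measure_nhdsWithin_pos
    hK (μ := τ) (x₀ := a) (c := fun x => eval x g ^ 2) (g := fun x => eval x J)
    (fun U hU haU => ?_) (continuous_eval g |>.pow 2).continuousOn
    (fun x hx hxa => pow_lt_pow_left₀ (hlt x hx hxa) (hg0 x hx) two_ne_zero)
    (fun x _ => sq_nonneg _) (by rw [hga]; positivity) haK hJint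
    (continuous_eval J).continuousWithinAt
  · refine ge_of_tendsto' hlim fun N => ?_
    simp only [hKτ, smul_eq_mul]
    refine mul_nonneg (inv_nonneg.2 (integral_nonneg fun x => by positivity)) ?_
    simpa only [map_mul, map_pow, pow_right_comm] using hJ (g ^ N)
  · rw [← Measure.restrict_apply hU.measurableSet, hKτ]
    exact (Measure.mem_support_iff_forall a).1 ha U (hU.mem_nhds haU)

end Support

section IntegrateOut

variable {n m : ℕ} {ν : Measure (Fin m → ℝ)}

lemma exists_eval_sumElim_eq {σ τ : Type*} (x : σ → ℝ) (q : MvPolynomial (σ ⊕ τ) ℝ) :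
    ∃ f : MvPolynomial τ ℝ, ∀ y, eval y f = eval (Sum.elim x y) q := by
  refine ⟨bind₁ (Sum.elim (fun i => C (x i)) X) q, fun y => ?_⟩
  induction q using MvPolynomial.induction_on with
  | C a => simp
  | add f g hf hg => simp only [map_add, hf, hg]
  | mul_X f i hf => cases i <;> simp [hf]

lemma eval_integY (hmom : momentsFinite ν) (x : Fin n → ℝ)
    (q : MvPolynomial (Fin n ⊕ Fin m) ℝ) :
    eval x (integY ν q) = ∫ y, eval (Sum.elim x y) q ∂ν := by
  have hterm (e : (Fin n ⊕ Fin m) →₀ ℕ) (y : Fin m → ℝ) :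
      eval (Sum.elim x y) (monomial e (coeff e q)) =
        eval x (monomial (xPart e) (coeff e q)) * ∏ j, y j ^ e (Sum.inr j) := by
    rw [← mul_one (coeff e q), ← C_mul_monomial, ← C_mul_monomial, map_mul, map_mul, eval_C,
      eval_C, eval_sumElim_monomial, mul_assoc]
  conv_rhs => rw [as_sum q]
  simp only [map_sum, hterm, integY]
  rw [integral_finsetSum _ fun e _ => (hmom.integrable_prod_pow _).const_mul _]
  refine sum_congr rfl fun e _ => ?_
  rw [integral_const_mul, eval_monomial, eval_monomial, mul_right_comm]

end IntegrateOut

section TraceOne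

variable {Ω σ ι : Type*} [Fintype ι] [MeasurableSpace Ω] {μ : Measure Ω} {ξ : Ω → σ → ℝ}
  {D : Ω → ι → ι → ℝ} {S : (σ →₀ ℕ) → ι → ι → ℝ}

lemma RepresentsMoments.integrable_eval (h : RepresentsMoments μ ξ D S)
    (htr : ∀ᵐ ω ∂μ, ∑ k, D ω k k = 1) (f : MvPolynomial σ ℝ) :
    Integrable (fun ω => eval (ξ ω) f) μ := by
  refine (integrable_finsetSum univ fun k _ => h.integrable f k k).congr ?_
  filter_upwards [htr] with ω hω
  rw [← mul_sum, hω, mul_one]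

lemma RepresentsMoments.integral_eval (h : RepresentsMoments μ ξ D S)
    (htr : ∀ᵐ ω ∂μ, ∑ k, D ω k k = 1) (f : MvPolynomial σ ℝ) :
    ∫ ω, eval (ξ ω) f ∂μ = ∑ k, riesz S f k k := by
  simp only [h.riesz_eq]
  rw [← integral_finsetSum _ fun k _ => h.integrable f k k]
  refine integral_congr_ae ?_
  filter_upwards [htr] with ω hω
  rw [← mul_sum, hω, mul_one]

end TraceOne

section PosSemidefOnSupport

variable {n m p q : ℕ} {ν : Measure (Fin m → ℝ)}
  {G : Matrix (Fin q) (Fin q) (MvPolynomial (Fin n ⊕ Fin m) ℝ)}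
  {S : (Fin n →₀ ℕ) → Matrix (Fin p) (Fin p) ℝ}
  {Ω : Type*} [MeasurableSpace Ω] {μ : Measure Ω} {ξ : Ω → Fin n → ℝ}
  {D : Ω → Fin p → Fin p → ℝ}

/-- The polynomial `vᵀ G v` for a constant vector `v`. -/
def quadPoly {σ κ : Type*} [Fintype κ] (G : Matrix κ κ (MvPolynomial σ ℝ)) (v : κ → ℝ) :
    MvPolynomial σ ℝ :=
  (fun k => C (v k)) ⬝ᵥ G *ᵥ fun k => C (v k)

lemma eval_quadPoly {σ κ : Type*} [Fintype κ] (G : Matrix κ κ (MvPolynomial σ ℝ)) (v : κ → ℝ)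
    (z : σ → ℝ) : eval z (quadPoly G v) = v ⬝ᵥ evalMat z G *ᵥ v := by
  simp only [quadPoly, dotProduct, Matrix.mulVec, map_sum, map_mul, eval_C, evalMat,
    Matrix.map_apply]

lemma posSemidef_evalMat_iff {σ κ : Type*} [Fintype κ] {G : Matrix κ κ (MvPolynomial σ ℝ)}
    (hG : G.IsSymm) {z : σ → ℝ} :
    (evalMat z G).PosSemidef ↔ ∀ v : κ → ℝ, 0 ≤ eval z (quadPoly G v) := by
  simp only [eval_quadPoly]
  refine ⟨fun h v => h.dotProduct_mulVec_nonneg v, .of_dotProduct_mulVec_nonneg ?_⟩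
  rw [Matrix.IsHermitian, conjTranspose_eq_transpose_of_trivial, evalMat, ← transpose_map, hG]

lemma vecMulVec_conj_apply {ι κ R : Type*} [Fintype κ] [CommSemiring R] (G : Matrix κ κ R)
    (u : ι → R) (w : κ → R) (i j : ι) :
    (vecMulVec u w * G * (vecMulVec u w)ᵀ) i j = u i * u j * (w ⬝ᵥ G *ᵥ w) := by
  rw [transpose_vecMulVec, vecMulVec_mul, vecMulVec_mul_vecMulVec, dotProduct_mulVec]
  simp [vecMulVec_apply]
  ring

lemma RepresentsMoments.integral_sq_mul_quadPoly_nonneg [SFinite μ]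
    (h : RepresentsMoments μ ξ D fun α i j => S α i j) (htr : ∀ᵐ ω ∂μ, ∑ k, D ω k k = 1)
    (hmom : momentsFinite ν) (hloc : ∀ d k : ℕ, (locMat ν G S d k).PosSemidef)
    (f : MvPolynomial (Fin n ⊕ Fin m) ℝ) (v : Fin q → ℝ) :
    0 ≤ ∫ z, eval (Sum.elim (ξ z.1) z.2) (f ^ 2 * quadPoly G v) ∂μ.prod ν := by
  have := hmom.isFiniteMeasure
  rw [(h.prod hmom).integral_eval (Measure.quasiMeasurePreserving_fst.ae htr)]
  refine sum_nonneg fun k _ => ?_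
  have hk := sum_riesz_conj_nonneg_of_locMat hloc (vecMulVec (Pi.single k f) fun l => C (v l))
  simp only [vecMulVec_conj_apply] at hk
  rwa [sum_eq_single k (by simp +contextual) (by simp),
    sum_eq_single k (by simp +contextual) (by simp), Pi.single_eq_same, ← sq] at hk

theorem RepresentsMoments.posSemidef_of_mem_support [IsFiniteMeasure μ]
    (h : RepresentsMoments μ ξ D fun α i j => S α i j) (htr : ∀ᵐ ω ∂μ, ∑ k, D ω k k = 1)
    (hξ : Measurable ξ) {K : Set (Fin n → ℝ)} (hK : IsCompact K) (hξK : ∀ᵐ ω ∂μ, ξ ω ∈ K)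
    {Y : Set (Fin m → ℝ)} (hsupp : hasSupport ν Y) (hmom : momentsFinite ν) (hcar : Carleman ν)
    (hG : G.IsSymm) (hloc : ∀ d k : ℕ, (locMat ν G S d k).PosSemidef)
    {x : Fin n → ℝ} (hx : x ∈ (μ.map ξ).support) {y : Fin m → ℝ} (hy : y ∈ Y) :
    (evalMat (Sum.elim x y) G).PosSemidef := by
  have := hmom.isFiniteMeasure
  refine (posSemidef_evalMat_iff hG).2 fun v => ?_
  obtain ⟨f, hf⟩ := exists_eval_sumElim_eq x (quadPoly G v)
  rw [← hf]
  refine eval_nonneg_of_integral_sq_nonneg hsupp hcar hmom (fun g => ?_) hy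
  have hJ : ∫ y, eval y (g ^ 2 * f) ∂ν =
      eval x (integY ν (rename Sum.inr g ^ 2 * quadPoly G v)) := by
    rw [eval_integY hmom]
    simp only [map_mul, map_pow, hf, eval_rename, Sum.elim_comp_inr]
  rw [hJ]
  refine eval_nonneg_of_mem_support hK ((ae_map_iff hξ.aemeasurable hK.measurableSet).2 hξK)
    (fun l => ?_) hx
  have hnn := h.integral_sq_mul_quadPoly_nonneg htr hmom hloc
    (rename Sum.inl l * rename Sum.inr g) v
  rw [integral_prod _ ((h.prod hmom).integrable_eval
    (Measure.quasiMeasurePreserving_fst.ae htr) _)] at hnn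
  rw [integral_map hξ.aemeasurable (continuous_eval _).aestronglyMeasurable]
  simpa only [map_mul, map_pow, eval_integY hmom, ← integral_const_mul, mul_pow, mul_assoc,
    eval_rename, Sum.elim_comp_inl, Sum.elim_comp_inr] using hnn

end PosSemidefOnSupport

/-! ### Signed measures -/

section SignedIntegral

variable {Z : Type*} [MeasurableSpace Z] {s : SignedMeasure Z} {μ₁ μ₂ : Measure Z}

lemma posPart_le_of_apply_eq_sub [IsFiniteMeasure μ₁]
    (h : ∀ A, MeasurableSet A → s A = μ₁.real A - μ₂.real A) :
    s.toJordanDecomposition.posPart ≤ μ₁ := by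
  obtain ⟨i, hi, hi₀, -, hpos, -⟩ := s.toJordanDecomposition_spec
  refine Measure.le_iff.2 fun A hA => ?_
  rw [← ENNReal.toReal_le_toReal (measure_ne_top _ _) (measure_ne_top _ _), ← measureReal_def,
    hpos, SignedMeasure.toMeasureOfZeroLE_real_apply _ hi₀ hi hA, h _ (hi.inter hA)]
  exact (sub_le_self _ measureReal_nonneg).trans (measureReal_mono Set.inter_subset_right)

lemma negPart_le_of_apply_eq_sub [IsFiniteMeasure μ₂]
    (h : ∀ A, MeasurableSet A → s A = μ₁.real A - μ₂.real A) :
    s.toJordanDecomposition.negPart ≤ μ₂ := by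
  have := posPart_le_of_apply_eq_sub (s := -s) (μ₁ := μ₂) (μ₂ := μ₁) fun A hA => by
    rw [_root_.neg_apply, h A hA, neg_sub]
  rwa [SignedMeasure.toJordanDecomposition_neg, JordanDecomposition.neg_posPart] at this

lemma sInt_eq_sub [IsFiniteMeasure μ₁] [IsFiniteMeasure μ₂]
    (h : ∀ A, MeasurableSet A → s A = μ₁.real A - μ₂.real A) {f : Z → ℝ}
    (h₁ : Integrable f μ₁) (h₂ : Integrable f μ₂) :
    sInt s f = ∫ z, f z ∂μ₁ - ∫ z, f z ∂μ₂ := by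
  have hadd : s.toJordanDecomposition.posPart + μ₂ = s.toJordanDecomposition.negPart + μ₁ := by
    refine Measure.ext fun A hA => (measureReal_eq_measureReal_iff).1 ?_
    rw [measureReal_add_apply, measureReal_add_apply]
    linarith [h A hA, s.apply_eq_posPart_real_sub_negPart_real hA]
  have hint := congr_arg (fun μ => ∫ z, f z ∂μ) hadd
  rw [integral_add_measure (h₁.mono_measure (posPart_le_of_apply_eq_sub h)) h₂,
    integral_add_measure (h₂.mono_measure (negPart_le_of_apply_eq_sub h)) h₁] at hint
  rw [sInt]
  linarith

end SignedIntegral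

section PushforwardOfDensity

variable {Z Ω : Type*} [MeasurableSpace Z] [MeasurableSpace Ω] {μ : Measure Ω} {ξ : Ω → Z}
  {D : Ω → ℝ} {f : Z → ℝ}

/-- The image under `ξ` of the measure with density `D` with respect to `μ`, negative values of `D`
being replaced by `0`. It serves to split the image of a signed density into two measures. -/
def mapDensity (μ : Measure Ω) (ξ : Ω → Z) (D : Ω → ℝ) : Measure Z :=
  (μ.withDensity fun ω => ENNReal.ofReal (D ω)).map ξ

lemma isFiniteMeasure_mapDensity (hD : Integrable D μ) : IsFiniteMeasure (mapDensity μ ξ D) := by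
  have := isFiniteMeasure_withDensity_ofReal hD.2
  exact Measure.isFiniteMeasure_map _ _

lemma integral_mapDensity (hξ : Measurable ξ) (hD : Integrable D μ) (hf : Measurable f) :
    ∫ z, f z ∂mapDensity μ ξ D = ∫ ω, max (D ω) 0 * f (ξ ω) ∂μ := by
  rw [mapDensity, integral_map hξ.aemeasurable hf.aestronglyMeasurable,
    integral_withDensity_eq_integral_toReal_smul₀ hD.aemeasurable.ennreal_ofReal (by simp)]
  simp only [ENNReal.toReal_ofReal', smul_eq_mul]

lemma integrable_mapDensity_iff (hξ : Measurable ξ) (hD : Integrable D μ) (hf : Measurable f) :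
    Integrable f (mapDensity μ ξ D) ↔ Integrable (fun ω => max (D ω) 0 * f (ξ ω)) μ := by
  rw [mapDensity, integrable_map_measure hf.aestronglyMeasurable hξ.aemeasurable]
  exact integrable_withDensity_iff_integrable_smul₀ hD.aemeasurable.real_toNNReal

lemma real_mapDensity_apply (hξ : Measurable ξ) (hD : Integrable D μ) {A : Set Z}
    (hA : MeasurableSet A) : (mapDensity μ ξ D).real A = ∫ ω in ξ ⁻¹' A, max (D ω) 0 ∂μ := by
  rw [← integral_indicator_one hA, integral_mapDensity hξ hD (measurable_one.indicator hA),
    ← integral_indicator (hξ hA)]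
  refine integral_congr_ae (.of_forall fun ω => ?_)
  by_cases h : ξ ω ∈ A <;> simp [h]

lemma integrable_max_zero_mul (hξ : Measurable ξ) (hD : Integrable D μ) (hf : Measurable f)
    (hfD : Integrable (fun ω => f (ξ ω) * D ω) μ) :
    Integrable (fun ω => max (D ω) 0 * f (ξ ω)) μ := by
  refine hfD.mono (hD.pos_part.aestronglyMeasurable.mul
    (hf.comp hξ).aestronglyMeasurable) (.of_forall fun ω => ?_)
  rw [norm_mul, norm_mul, mul_comm]
  refine mul_le_mul_of_nonneg_left ?_ (norm_nonneg _)
  rw [Real.norm_of_nonneg (le_max_right _ _)]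
  exact max_le (le_abs_self _) (abs_nonneg _)

lemma sInt_eq_integral_mul {s : SignedMeasure Z} (hξ : Measurable ξ) (hD : Integrable D μ)
    (h : ∀ A, MeasurableSet A → s A = ∫ ω in ξ ⁻¹' A, D ω ∂μ) (hf : Measurable f)
    (hfD : Integrable (fun ω => f (ξ ω) * D ω) μ) :
    sInt s f = ∫ ω, f (ξ ω) * D ω ∂μ := by
  have hpos := integrable_max_zero_mul hξ hD hf hfD
  have hneg := integrable_max_zero_mul hξ hD.neg hf (by simpa using hfD.neg)
  have := isFiniteMeasure_mapDensity (ξ := ξ) hD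
  have := isFiniteMeasure_mapDensity (ξ := ξ) hD.neg
  rw [sInt_eq_sub (μ₁ := mapDensity μ ξ D) (μ₂ := mapDensity μ ξ (-D)) (fun A hA => ?_)
    ((integrable_mapDensity_iff hξ hD hf).2 hpos)
    ((integrable_mapDensity_iff hξ hD.neg hf).2 hneg), integral_mapDensity hξ hD hf,
    integral_mapDensity hξ hD.neg hf, ← integral_sub hpos hneg]
  · simp only [← sub_mul, Pi.neg_apply, max_zero_sub_max_neg_zero_eq_self, mul_comm (f _)]
  · rw [h A hA, real_mapDensity_apply hξ hD hA, real_mapDensity_apply hξ hD.neg hA,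
      ← integral_sub hD.pos_part.integrableOn hD.neg.pos_part.integrableOn]
    simp only [Pi.neg_apply, max_zero_sub_max_neg_zero_eq_self]

end PushforwardOfDensity

/-! ### Positive semidefinite matrix-valued measures -/

section IsPSDMeasure

variable {Ω Z ι : Type*} [Fintype ι] [MeasurableSpace Ω] [MeasurableSpace Z] {μ : Measure Ω}
  {D : Ω → ι → ι → ℝ}

/-- A matrix `Φ` of signed measures is a positive semidefinite matrix-valued measure: all the
matrices `Φ(A)` are symmetric and positive semidefinite. -/
structure IsPSDMeasure (Φ : ι → ι → SignedMeasure Z) : Prop where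
  symm : ∀ i j, Φ i j = Φ j i
  nonneg : ∀ A, MeasurableSet A → ∀ v : ι → ℝ, 0 ≤ ∑ i, ∑ j, v i * v j * Φ i j A

lemma integral_sum_mul_mul (hD : ∀ i j, Integrable (fun ω => D ω i j) μ) (v : ι → ℝ) :
    ∫ ω, ∑ i, ∑ j, v i * v j * D ω i j ∂μ = ∑ i, ∑ j, v i * v j * ∫ ω, D ω i j ∂μ := by
  simp only [← integral_const_mul]
  rw [integral_finsetSum _ fun i _ => integrable_finsetSum _ fun j _ => (hD i j).const_mul _]
  exact sum_congr rfl fun i _ => integral_finsetSum _ fun j _ => (hD i j).const_mul _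

lemma map_withDensityᵥ_apply {f : Ω → ℝ} (hf : Integrable f μ) {ξ : Ω → Z} (hξ : Measurable ξ)
    {A : Set Z} (hA : MeasurableSet A) :
    (μ.withDensityᵥ f).map ξ A = ∫ ω in ξ ⁻¹' A, f ω ∂μ := by
  rw [VectorMeasure.map_apply _ hξ hA, withDensityᵥ_apply hf (hξ hA)]

lemma isPSDMeasure_map_withDensityᵥ (hD : ∀ᵐ ω ∂μ, (Matrix.of (D ω)).PosSemidef)
    (hint : ∀ i j, Integrable (fun ω => D ω i j) μ) {ξ : Ω → Z} (hξ : Measurable ξ) :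
    IsPSDMeasure fun i j => (μ.withDensityᵥ fun ω => D ω i j).map ξ := by
  simp only [posSemidef_iff_sum_nonneg, Matrix.of_apply] at hD
  refine ⟨fun i j => ?_, fun A hA v => ?_⟩
  · refine VectorMeasure.ext fun A hA => ?_
    rw [map_withDensityᵥ_apply (hint i j) hξ hA, map_withDensityᵥ_apply (hint j i) hξ hA]
    refine integral_congr_ae (ae_restrict_of_ae ?_)
    filter_upwards [hD] with ω hω using hω.1 i j
  · simp only [map_withDensityᵥ_apply (hint _ _) hξ hA]
    rw [← integral_sum_mul_mul fun i j => (hint i j).integrableOn]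
    refine integral_nonneg_of_ae (ae_restrict_of_ae ?_)
    filter_upwards [hD] with ω hω using hω.2 v

lemma ae_posSemidef_of_setIntegral_nonneg (hsymm : ∀ ω i j, D ω i j = D ω j i)
    (hint : ∀ i j, Integrable (fun ω => D ω i j) μ)
    (h : ∀ A, MeasurableSet A → ∀ v : ι → ℝ, 0 ≤ ∑ i, ∑ j, v i * v j * ∫ ω in A, D ω i j ∂μ) :
    ∀ᵐ ω ∂μ, (Matrix.of (D ω)).PosSemidef := by
  have hv (v : ι → ℝ) : ∀ᵐ ω ∂μ, 0 ≤ ∑ i, ∑ j, v i * v j * D ω i j := by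
    refine ae_nonneg_of_forall_setIntegral_nonneg (integrable_finsetSum _ fun i _ =>
      integrable_finsetSum _ fun j _ => (hint i j).const_mul _) fun A hA _ => ?_
    rw [integral_sum_mul_mul fun i j => (hint i j).integrableOn]
    exact h A hA v
  filter_upwards [ae_all_iff.2 fun k => hv (TopologicalSpace.denseSeq (ι → ℝ) k)] with ω hω
  refine posSemidef_iff_sum_nonneg.2 ⟨hsymm ω, fun v => ?_⟩
  refine (TopologicalSpace.denseRange_denseSeq (ι → ℝ)).induction_on
    (p := fun v => 0 ≤ ∑ i, ∑ j, v i * v j * D ω i j) v ?_ hω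
  exact isClosed_le continuous_const (by fun_prop)

lemma setIntegral_rnDeriv_eq {s : SignedMeasure Ω} [SigmaFinite μ]
    (hs : s ≪ᵥ μ.toENNRealVectorMeasure) {A : Set Ω} (hA : MeasurableSet A) :
    ∫ ω in A, s.rnDeriv μ ω ∂μ = s A := by
  rw [← withDensityᵥ_apply (SignedMeasure.integrable_rnDeriv _ _) hA,
    SignedMeasure.withDensityᵥ_rnDeriv_eq _ _ hs]

lemma IsPSDMeasure.ae_posSemidef_rnDeriv [SigmaFinite μ] {Φ : ι → ι → SignedMeasure Ω}
    (hΦ : IsPSDMeasure Φ) (hac : ∀ i j, Φ i j ≪ᵥ μ.toENNRealVectorMeasure) :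
    ∀ᵐ ω ∂μ, (Matrix.of fun i j => (Φ i j).rnDeriv μ ω).PosSemidef := by
  refine ae_posSemidef_of_setIntegral_nonneg (fun ω i j => by rw [hΦ.symm])
    (fun i j => SignedMeasure.integrable_rnDeriv _ _) fun A hA v => ?_
  simpa only [setIntegral_rnDeriv_eq (hac _ _) hA] using hΦ.nonneg A hA v

lemma absolutelyContinuous_restrict_of_totalVariation {s : SignedMeasure Ω}
    (hs : s.totalVariation ≪ μ) {K : Set Ω} (hK : MeasurableSet K)
    (hsK : ∀ A, MeasurableSet A → A ∩ K = ∅ → s A = 0) :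
    s ≪ᵥ (μ.restrict K).toENNRealVectorMeasure := by
  refine VectorMeasure.AbsolutelyContinuous.mk fun A hA hA₀ => ?_
  rw [Measure.toENNRealVectorMeasure_apply_measurable hA, Measure.restrict_apply hA] at hA₀
  rw [← Set.inter_union_sdiff A K, VectorMeasure.of_union
    (Set.disjoint_sdiff_right.mono_left Set.inter_subset_right) (hA.inter hK) (hA.diff hK),
    SignedMeasure.null_of_totalVariation_zero _ (hs hA₀),
    hsK _ (hA.diff hK) Set.sdiff_inter_self, add_zero]

end IsPSDMeasure

section IsPSDRepresentingMeasure

variable {Ω σ ι : Type*} [Fintype σ] [Fintype ι] [MeasurableSpace Ω] {μ : Measure Ω}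
  {ξ : Ω → σ → ℝ} {D : Ω → ι → ι → ℝ} {S : (σ →₀ ℕ) → ι → ι → ℝ} {K : Set (σ → ℝ)}

/-- `Φ` is a positive semidefinite matrix-valued measure carried by `K` with moments `S`. Being
carried by `K` is expressed by the vanishing of `Φ` on the measurable sets disjoint from `K`. -/
structure IsPSDRepresentingMeasure (K : Set (σ → ℝ)) (S : (σ →₀ ℕ) → ι → ι → ℝ)
    (Φ : ι → ι → SignedMeasure (σ → ℝ)) : Prop extends IsPSDMeasure Φ where
  apply_eq_zero : ∀ i j A, MeasurableSet A → A ∩ K = ∅ → Φ i j A = 0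
  apply_eq_sInt : ∀ α i j, S α i j = sInt (Φ i j) fun x => ∏ l, x l ^ α l

theorem RepresentsMoments.isPSDRepresentingMeasure (h : RepresentsMoments μ ξ D S)
    (hξ : Measurable ξ) (hK : ∀ᵐ ω ∂μ, ξ ω ∈ K) :
    IsPSDRepresentingMeasure K S fun i j => (μ.withDensityᵥ fun ω => D ω i j).map ξ := by
  have hint (i j : ι) : Integrable (fun ω => D ω i j) μ := by simpa using h.integrable 1 i j
  refine ⟨isPSDMeasure_map_withDensityᵥ h.ae_posSemidef hint hξ, fun i j A hA hAK => ?_,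
    fun α i j => ?_⟩
  · rw [map_withDensityᵥ_apply (hint i j) hξ hA]
    have hsub : ξ ⁻¹' A ⊆ {ω | ξ ω ∉ K} := fun ω hωA hωK =>
      Set.eq_empty_iff_forall_notMem.1 hAK _ ⟨hωA, hωK⟩
    exact setIntegral_measure_zero _ (measure_mono_null hsub (ae_iff.1 hK))
  · simp only [← eval_monomial_one]
    rw [h.apply_eq, sInt_eq_integral_mul hξ (hint i j)
      (fun A hA => map_withDensityᵥ_apply (hint i j) hξ hA) (continuous_eval _).measurable
      (h.integrable _ i j)]

theorem IsPSDRepresentingMeasure.exists_representsMoments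
    {Φ : ι → ι → SignedMeasure (σ → ℝ)} (hΦ : IsPSDRepresentingMeasure K S Φ)
    (hK : MeasurableSet K) {r : ℝ} (hr : ∀ x ∈ K, ∀ l, |x l| ≤ r) :
    ∃ (μ : Measure (σ → ℝ)) (D : (σ → ℝ) → ι → ι → ℝ),
      IsFiniteMeasure μ ∧ (∀ᵐ x ∂μ, x ∈ K) ∧ RepresentsMoments μ id D S := by
  let μ := ∑ i, ∑ j, (Φ i j).totalVariation
  let D x i j := (Φ i j).rnDeriv (μ.restrict K) x
  have htv (i j) : (Φ i j).totalVariation ≤ μ :=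
    (single_le_sum (f := fun j => (Φ i j).totalVariation) (fun _ _ => Measure.zero_le _)
      (mem_univ j)).trans (single_le_sum (f := fun i => ∑ j, (Φ i j).totalVariation)
        (fun _ _ => Measure.zero_le _) (mem_univ i))
  have hac (i j) : Φ i j ≪ᵥ (μ.restrict K).toENNRealVectorMeasure :=
    absolutelyContinuous_restrict_of_totalVariation (htv i j).absolutelyContinuous hK
      (hΦ.apply_eq_zero i j)
  have hD (i j) : Integrable (fun x => D x i j) (μ.restrict K) :=
    SignedMeasure.integrable_rnDeriv _ _
  have hint (α i j) : Integrable (fun x => eval x (monomial α 1) * D x i j) (μ.restrict K) := by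
    refine (hD i j).bdd_mul (continuous_eval _).aestronglyMeasurable (c := r ^ α.degree) ?_
    filter_upwards [ae_restrict_mem hK] with x hx using abs_eval_monomial_le (hr x hx) α
  refine ⟨μ.restrict K, D, inferInstance, ae_restrict_mem hK,
    .of_monomial (hΦ.ae_posSemidef_rnDeriv hac) hint fun α i j => ?_⟩
  rw [hΦ.apply_eq_sInt]
  simp only [← eval_monomial_one]
  exact sInt_eq_integral_mul measurable_id (hD i j)
    (fun A hA => (setIntegral_rnDeriv_eq (hac i j) hA).symm) (continuous_eval _).measurable
    (hint α i j)

end IsPSDRepresentingMeasure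

/-! ### Representing measures on the box -/

section Box

variable {σ ι : Type*} [Fintype σ] {r : ℝ}

lemma setOf_forall_abs_le_eq_closedBall (hr : 0 ≤ r) :
    {x : σ → ℝ | ∀ i, |x i| ≤ r} = Metric.closedBall 0 r := by
  ext x
  simp only [Set.mem_ofPred_eq, mem_closedBall_zero_iff, pi_norm_le_iff_of_nonneg hr,
    Real.norm_eq_abs]

theorem IsPosSeq.exists_representsMoments [Fintype ι] {S : (σ →₀ ℕ) → ι → ι → ℝ}
    (hS : IsPosSeq r S) (hr : 0 < r) :
    ∃ μ : Measure ((σ → ℝ) × (ι → ι → ℝ)), IsFiniteMeasure μ ∧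
      (∀ᵐ e ∂μ, e ∈ boxStates σ ι r) ∧ RepresentsMoments μ Prod.fst Prod.snd S := by
  obtain ⟨μ, hfin, hμ, hSμ⟩ := hS.exists_measure hr
  refine ⟨μ, hfin, hμ, .of_monomial (hμ.mono fun e he => he.2.1) (fun α i j => ?_) hSμ⟩
  have hcont : Continuous fun e : (σ → ℝ) × (ι → ι → ℝ) =>
      eval e.1 (monomial α 1) * e.2 i j :=
    ((continuous_eval _).comp continuous_fst).mul (by fun_prop)
  rw [← Measure.restrict_eq_self_of_ae_mem hμ]
  exact hcont.continuousOn.integrableOn_compact isCompact_boxStates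

end Box

section PosSemidefSet

variable {n m p q : ℕ} {ν : Measure (Fin m → ℝ)} {Y : Set (Fin m → ℝ)}
  {G : Matrix (Fin q) (Fin q) (MvPolynomial (Fin n ⊕ Fin m) ℝ)}

lemma isClosed_setOf_posSemidef_evalMat (hG : G.IsSymm) (Y : Set (Fin m → ℝ)) :
    IsClosed {x : Fin n → ℝ | ∀ y ∈ Y, (evalMat (Sum.elim x y) G).PosSemidef} := by
  have hcont (y : Fin m → ℝ) : Continuous fun x : Fin n → ℝ => (Sum.elim x y : Fin n ⊕ Fin m → ℝ) :=
    continuous_pi fun i => i.rec continuous_apply fun _ => continuous_const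
  simp only [posSemidef_evalMat_iff hG, Set.ofPred_forall]
  exact isClosed_biInter fun y _ => isClosed_iInter fun v =>
    isClosed_le continuous_const ((continuous_eval _).comp (hcont y))

lemma RepresentsMoments.ae_posSemidef_evalMat {Ω : Type*} [MeasurableSpace Ω] {μ : Measure Ω}
    {ξ : Ω → Fin n → ℝ} {D : Ω → Fin p → Fin p → ℝ}
    {S : (Fin n →₀ ℕ) → Matrix (Fin p) (Fin p) ℝ} [IsFiniteMeasure μ]
    (h : RepresentsMoments μ ξ D fun α i j => S α i j) (htr : ∀ᵐ ω ∂μ, ∑ k, D ω k k = 1)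
    (hξ : Measurable ξ) {K : Set (Fin n → ℝ)} (hK : IsCompact K) (hξK : ∀ᵐ ω ∂μ, ξ ω ∈ K)
    (hsupp : hasSupport ν Y) (hmom : momentsFinite ν) (hcar : Carleman ν)
    (hG : G.IsSymm) (hloc : ∀ d k : ℕ, (locMat ν G S d k).PosSemidef) :
    ∀ᵐ ω ∂μ, ∀ y ∈ Y, (evalMat (Sum.elim (ξ ω) y) G).PosSemidef := by
  have hμ : ∀ᵐ ω ∂μ, ξ ω ∈ (μ.map ξ).support :=
    ae_of_ae_map hξ.aemeasurable Measure.support_mem_ae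
  filter_upwards [hμ] with ω hω y hy
  exact h.posSemidef_of_mem_support htr hξ hK hξK hsupp hmom hcar hG hloc hω hy

end PosSemidefSet

end

/-- exponentially bounded matrix moment problem on `X ∩ [−C,C]ⁿ`. -/
theorem matrix_moment_problem {n m p q : ℕ}
    (Y : Set (Fin m → ℝ)) (hY : IsClosed Y)
    (ν : Measure (Fin m → ℝ)) (hsupp : hasSupport ν Y) (hmom : momentsFinite ν)
    (hcar : Carleman ν)
    (G : Matrix (Fin q) (Fin q) (MvPolynomial (Fin n ⊕ Fin m) ℝ)) (hGs : G.IsSymm)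
    (S : (Fin n →₀ ℕ) → Matrix (Fin p) (Fin p) ℝ) (hsym : ∀ α, (S α).IsSymm)
    (C : ℝ) (hC : 0 < C) :
    (∃ Φ : Fin p → Fin p → MeasureTheory.SignedMeasure (Fin n → ℝ),
        (∀ i j, Φ i j = Φ j i) ∧
        (∀ A : Set (Fin n → ℝ), MeasurableSet A → ∀ v : Fin p → ℝ,
          0 ≤ ∑ i, ∑ j, v i * v j * Φ i j A) ∧
        (∀ i j, ∀ A : Set (Fin n → ℝ), MeasurableSet A →
          A ∩ ({x | ∀ y ∈ Y, (evalMat (Sum.elim x y) G).PosSemidef} ∩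
            {x | ∀ i', |x i'| ≤ C}) = ∅ →
          Φ i j A = 0) ∧
        (∀ (α : Fin n →₀ ℕ) (i j : Fin p),
          S α i j = sInt (Φ i j) (fun x => ∏ l, x l ^ α l))) ↔
      (MomentPSD S ∧ (∀ d k : ℕ, (locMat ν G S d k).PosSemidef) ∧
        ∃ C₀ > (0 : ℝ), ∀ α : Fin n →₀ ℕ, specNorm (S α) ≤ C₀ * C ^ (∑ i, α i)) := by
  constructor
  · rintro ⟨Φ, hsymm, hnonneg, hcarrier, hS⟩
    have hΦ : IsPSDRepresentingMeasure _ (fun α i j => S α i j) Φ :=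
      ⟨⟨hsymm, hnonneg⟩, hcarrier, hS⟩
    have hX := (isClosed_setOf_posSemidef_evalMat hGs Y).measurableSet
    have hbox : MeasurableSet {x : Fin n → ℝ | ∀ i, |x i| ≤ C} := by
      rw [setOf_forall_abs_le_eq_closedBall hC.le]
      exact measurableSet_closedBall
    obtain ⟨μ, D, hfin, hμ, h⟩ := hΦ.exists_representsMoments (hX.inter hbox) fun x hx => hx.2
    exact ⟨h.momentPSD hsym, h.posSemidef_locMat hsym hGs hmom (mem_ae_iff.2 hsupp.1)
      (hμ.mono fun x hx => hx.1), h.exists_specNorm_le hC.le (hμ.mono fun x hx => hx.2)⟩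
  · rintro ⟨hM, hloc, c, -, hb⟩
    obtain ⟨μ, hfin, hμ, h⟩ := (hM.isPosSeq hsym hb).exists_representsMoments hC
    have hX := h.ae_posSemidef_evalMat (hμ.mono fun e he => he.2.2) measurable_fst
      (isCompact_closedBall 0 C) (hμ.mono fun e he => he.1) hsupp hmom hcar hGs hloc
    have hK : ∀ᵐ e ∂μ, e.1 ∈ {x | ∀ y ∈ Y, (evalMat (Sum.elim x y) G).PosSemidef} ∩
        {x | ∀ i, |x i| ≤ C} :=
      hX.and (hμ.mono fun e he => (setOf_forall_abs_le_eq_closedBall hC.le).ge he.1)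
    have hΦ := h.isPSDRepresentingMeasure measurable_fst hK
    exact ⟨_, hΦ.symm, hΦ.nonneg, hΦ.apply_eq_zero, hΦ.apply_eq_sInt⟩
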